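/- (Corollary 1.4) Assume d ≥ 4 is such that ρ := 7(2/(d+1) + (1 − 2/(d+1)) q(d−1)) < 1. Then there exist constants c_0 = 8d/log(1/ρ) and u_0 > 0 depending only on d such that lim_{N→∞} N^{2d} sup_{j∈ℤ} P[(U_{c_0,j,u_0 N^{d−1}})^c] = 0. -/

import Mathlib

open MeasureTheory Filter
open scoped ENNReal Classical

namespace DiscCyl

/-- The lattice `ℤ^{d+1}`. -/
abbrev Lat (d : ℕ) := Fin (d + 1) → ℤ

/-- The discrete cylinder `E = (ℤ/Nℤ)^d × ℤ`. -/
abbrev Cyl (d N : ℕ) := (Fin d → ZMod N) × ℤ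

instance (N : ℕ) : MeasurableSpace (ZMod N) := ⊤

instance (N : ℕ) : Countable (ZMod N) := by
  cases N with
  | zero => exact inferInstanceAs (Countable ℤ)
  | succ n => exact inferInstanceAs (Countable (Fin (n + 1)))

/-- The canonical projection `π_E : ℤ^{d+1} → E`. -/
def projE (d N : ℕ) (v : Lat d) : Cyl d N :=
  (fun i => (v i.castSucc : ZMod N), v (Fin.last d))

/-- The `2(d+1)` unit vectors `±e_i` of `ℤ^{d+1}`. -/
def unitVecs (d : ℕ) : Finset (Lat d) :=
  Finset.image (fun p : Fin (d + 1) × Bool => Pi.single p.1 (if p.2 then (1 : ℤ) else -1))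
    Finset.univ

/-- One-step transition probability of simple random walk on the cylinder:
each of the `2(d+1)` unit moves of `ℤ^{d+1}` is taken with probability `1/(2(d+1))`
and projected to `E`. -/
noncomputable def stepProb (d N : ℕ) (x y : Cyl d N) : ℝ≥0∞ :=
  (((unitVecs d).filter fun e => x + projE d N e = y).card : ℝ≥0∞) / (2 * (d + 1))

/-- `Pl` is the family of laws (indexed by the starting point) of simple random walk
on the cylinder `E = (ℤ/Nℤ)^d × ℤ`. -/
def IsCylRW (d N : ℕ) (Pl : Cyl d N → Measure (ℕ → Cyl d N)) : Prop :=
  (∀ x, IsProbabilityMeasure (Pl x)) ∧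
    ∀ (x : Cyl d N) (n : ℕ) (γ : ℕ → Cyl d N),
      Pl x {ω | ∀ i ≤ n, ω i = γ i} =
        (if γ 0 = x then 1 else 0) * ∏ i ∈ Finset.range n, stepProb d N (γ i) (γ (i + 1))

/-- The lattice `ℤ^ν`. -/
abbrev ZLat (ν : ℕ) := Fin ν → ℤ

/-- Unit vectors of `ℤ^ν`. -/
def zUnitVecs (ν : ℕ) : Set (ZLat ν) :=
  {v | ∃ i, v = Pi.single i 1 ∨ v = Pi.single i (-1)}

/-- One-step transition probability of simple random walk on `ℤ^ν`. -/
noncomputable def zStep (ν : ℕ) (x y : ZLat ν) : ℝ≥0∞ :=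
  if y - x ∈ zUnitVecs ν then (2 * ν : ℝ≥0∞)⁻¹ else 0

/-- `Ql` is the family of laws of simple random walk on `ℤ^ν`. -/
def IsLatRW (ν : ℕ) (Ql : ZLat ν → Measure (ℕ → ZLat ν)) : Prop :=
  (∀ x, IsProbabilityMeasure (Ql x)) ∧
    ∀ (x : ZLat ν) (n : ℕ) (γ : ℕ → ZLat ν),
      Ql x {ω | ∀ i ≤ n, ω i = γ i} =
        (if γ 0 = x then 1 else 0) * ∏ i ∈ Finset.range n, zStep ν (γ i) (γ (i + 1))

/-- `q(ν)`: the return probability to the origin of simple random walk on `ℤ^ν`. -/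
noncomputable def retProb (ν : ℕ) (Ql : ZLat ν → Measure (ℕ → ZLat ν)) : ℝ :=
  ((Ql 0) {ω | ∃ n : ℕ, 1 ≤ n ∧ ω n = 0}).toReal

/-- Entrance time `H_U` (with value `⊤` if `U` is never entered). -/
noncomputable def entT {X : Type*} (U : Set X) (ω : ℕ → X) : ℕ∞ :=
  sInf {t : ℕ∞ | ∃ n : ℕ, ω n ∈ U ∧ t = n}

/-- Exit time `T_U`. -/
noncomputable def exitT {X : Type*} (U : Set X) (ω : ℕ → X) : ℕ∞ :=
  entT Uᶜ ω

/-- `after t f ω = t + f (θ_t ω)`, with value `⊤` when `t = ⊤`. -/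
noncomputable def after {X : Type*} (t : ℕ∞) (f : (ℕ → X) → ℕ∞) (ω : ℕ → X) : ℕ∞ :=
  t.recTopCoe ⊤ fun m => (m : ℕ∞) + f fun k => ω (k + m)

/-- The block `C_j = (ℤ/Nℤ)^d × ([(j-3/4)N, (j+3/4)N] ∩ ℤ)`. -/
def Cblk (d N : ℕ) (j : ℤ) : Set (Cyl d N) :=
  {x | ((j : ℝ) - 3 / 4) * N ≤ (x.2 : ℝ) ∧ (x.2 : ℝ) ≤ ((j : ℝ) + 3 / 4) * N}

/-- The block `B_j = (ℤ/Nℤ)^d × [(j-1)N, (j+1)N]`. -/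
def Bblk (d N : ℕ) (j : ℤ) : Set (Cyl d N) :=
  {x | (j - 1) * (N : ℤ) ≤ x.2 ∧ x.2 ≤ (j + 1) * (N : ℤ)}

/-- The block `B̃_j = (ℤ/Nℤ)^d × [(j-2)N+1, (j+2)N-1]`. -/
def Btl (d N : ℕ) (j : ℤ) : Set (Cyl d N) :=
  {x | (j - 2) * (N : ℤ) + 1 ≤ x.2 ∧ x.2 ≤ (j + 2) * (N : ℤ) - 1}

/-- `D^j_1`: time of the first departure from `B̃_j` after the first return to `B_j`. -/
noncomputable def oneExc (d N : ℕ) (j : ℤ) (ω : ℕ → Cyl d N) : ℕ∞ :=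
  after (entT (Bblk d N j) ω) (exitT (Btl d N j)) ω

/-- `D^j_k`: time of the `k`-th departure from `B̃_j` (after successive returns to `B_j`). -/
noncomputable def DD (d N : ℕ) (j : ℤ) : ℕ → (ℕ → Cyl d N) → ℕ∞
  | 0, _ => 0
  | k + 1, ω => after (DD d N j k ω) (oneExc d N j) ω

/-- The law `P` of the walk with initial distribution uniform on `B_0`. -/
noncomputable def lawP (d N : ℕ) (Pl : Cyl d N → Measure (ℕ → Cyl d N)) :
    Measure (ℕ → Cyl d N) :=
  ((N : ℝ≥0∞) ^ d * (2 * N + 1))⁻¹ •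
    Measure.sum fun x : Cyl d N => if x ∈ Bblk d N 0 then Pl x else 0

/-- Nearest-neighbour adjacency on the cylinder. -/
def adj (d N : ℕ) (x y : Cyl d N) : Prop :=
  x ≠ y ∧ ∃ e ∈ unitVecs d, y = x + projE d N e

/-- `x` and `y` are connected by a nearest-neighbour path inside `S`. -/
def connIn (d N : ℕ) (S : Set (Cyl d N)) (x y : Cyl d N) : Prop :=
  Relation.ReflTransGen (fun a b => a ∈ S ∧ b ∈ S ∧ adj d N a b) x y

/-- `S` is a connected set. -/
def IsConnIn (d N : ℕ) (S : Set (Cyl d N)) : Prop :=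
  ∀ x ∈ S, ∀ y ∈ S, connIn d N S x y

/-- The boundary `∂U`. -/
def bdry (d N : ℕ) (U : Set (Cyl d N)) : Set (Cyl d N) :=
  {x | x ∉ U ∧ ∃ y ∈ U, adj d N x y}

/-- `ℓ^∞`-norm on `ℤ^{d+1}`. -/
def linf {d : ℕ} (v : Lat d) : ℕ := Finset.univ.sup fun i => (v i).natAbs

/-- `ℓ^∞`-distance induced on the cylinder. -/
noncomputable def cylDist (d N : ℕ) (x y : Cyl d N) : ℕ :=
  sInf {r : ℕ | ∃ v : Lat d, projE d N v = y - x ∧ linf v = r}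

/-- `S` has `ℓ^∞`-diameter at least `L`. -/
def diamGE (d N : ℕ) (S : Set (Cyl d N)) (L : ℕ) : Prop :=
  ∃ x ∈ S, ∃ y ∈ S, L ≤ cylDist d N x y

/-- `X_{[0,n]}`: the set of points visited up to time `n`. -/
def ran {X : Type*} (ω : ℕ → X) (n : ℕ) : Set X := {y | ∃ i ≤ n, ω i = y}

/-- The set of points visited up to the (possibly infinite) time `t`. -/
def ranE {X : Type*} (ω : ℕ → X) (t : ℕ∞) : Set X :=
  {y | ∃ i : ℕ, (i : ℕ∞) ≤ t ∧ ω i = y}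

/-- `L_m`: projections to `E` of `m`-dimensional affine coordinate lattices of `ℤ^{d+1}`. -/
def Lcoll (d N m : ℕ) : Set (Set (Cyl d N)) :=
  {F | ∃ I : Finset (Fin (d + 1)), I.card = m ∧ ∃ y : Lat d,
      F = (fun v => projE d N (y + v)) '' {v : Lat d | ∀ i ∉ I, v i = 0}}

/-- `A^j_m`: nonempty subsets of `C_j` contained in some `F ∈ L_m`. -/
def Adm (d N : ℕ) (j : ℤ) (m : ℕ) : Set (Finset (Cyl d N)) :=
  {A | A.Nonempty ∧ ↑A ⊆ Cblk d N j ∧ ∃ F ∈ Lcoll d N m, (↑A : Set (Cyl d N)) ⊆ F}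

/-- The segment `{x + k·e : 0 ≤ k ≤ L}` (addition via `π_E`). -/
def segment (d N : ℕ) (x : Cyl d N) (e : Lat d) (L : ℕ) : Set (Cyl d N) :=
  {y | ∃ k : ℕ, k ≤ L ∧ y = x + projE d N ((k : ℤ) • e)}

/-- The event `V_{K,j,t}` (with `k = ⌊t⌋` excursions). -/
def Vev (d N : ℕ) (K : ℝ) (j : ℤ) (k : ℕ) : Set (ℕ → Cyl d N) :=
  {ω | ∀ x ∈ Cblk d N j, ∀ e ∈ unitVecs d, ∃ i : ℕ, (i : ℝ) < Real.sqrt N ∧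
      ∀ l : ℕ, i ≤ l → l ≤ i + ⌊K * Real.log N⌋₊ →
        x + projE d N ((l : ℤ) • e) ∉ ranE ω (DD d N j k ω)}

/-- The event `U_{K,j,t}` (with `k = ⌊t⌋` excursions). -/
def Uev (d N : ℕ) (K : ℝ) (j : ℤ) (k : ℕ) : Set (ℕ → Cyl d N) :=
  {ω | ∀ F ∈ Lcoll d N 2, ∀ n : ℕ, (n : ℕ∞) ≤ DD d N j k ω →
      ∀ O₁ O₂ : Set (Cyl d N),
        O₁ ⊆ (F ∩ Cblk d N j) \ ran ω n → O₂ ⊆ (F ∩ Cblk d N j) \ ran ω n →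
        IsConnIn d N O₁ → IsConnIn d N O₂ →
        diamGE d N O₁ ⌊K * Real.log N⌋₊ → diamGE d N O₂ ⌊K * Real.log N⌋₊ →
        ∀ p ∈ O₁, ∀ q ∈ O₂, connIn d N ((F ∩ Cblk d N j) \ ran ω n) p q}

/-- A (finite) set `S` disconnects the cylinder. -/
def Disconnects (d N : ℕ) (S : Set (Cyl d N)) : Prop :=
  S.Finite ∧ ∃ M₀ : ℕ, ∀ M : ℕ, M₀ ≤ M → ∀ x y : Cyl d N,
    (M : ℤ) ≤ x.2 → y.2 ≤ -(M : ℤ) → ¬ connIn d N Sᶜ x y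

/-- The disconnection time `T_N`. -/
noncomputable def discT (d N : ℕ) (ω : ℕ → Cyl d N) : ℕ∞ :=
  sInf {t : ℕ∞ | ∃ n : ℕ, Disconnects d N (ran ω n) ∧ t = n}

/-- `r ≤ t` for `t : ℕ∞` and a real threshold `r` (trivially true when `t = ⊤`). -/
def geReal (t : ℕ∞) (r : ℝ) : Prop := ∀ n : ℕ, t = (n : ℕ∞) → r ≤ n

/-- `r < t` for `t : ℕ∞` and a real threshold `r` (trivially true when `t = ⊤`). -/
def gtReal (t : ℕ∞) (r : ℝ) : Prop := ∀ n : ℕ, t = (n : ℕ∞) → r < n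

/-- `φ_j(z) = E_z[exp(λ Σ_{x∈A} 1{H_x < T_{B̃_j}})]`. -/
noncomputable def phi (d N : ℕ) (Pl : Cyl d N → Measure (ℕ → Cyl d N)) (j : ℤ) (lam : ℝ)
    (A : Finset (Cyl d N)) (z : Cyl d N) : ℝ :=
  ∫ ω, Real.exp (lam * ∑ x ∈ A, if entT {x} ω < exitT (Btl d N j) ω then (1 : ℝ) else 0)
    ∂(Pl z)

/-- `‖φ_j‖_∞`. -/
noncomputable def phiSup (d N : ℕ) (Pl : Cyl d N → Measure (ℕ → Cyl d N)) (j : ℤ) (lam : ℝ)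
    (A : Finset (Cyl d N)) : ℝ :=
  ⨆ z : Cyl d N, phi d N Pl j lam A z

/-- `q_N = sup {P_z[H_F < T_{B̃_j}] : F ∈ L_m, z ∈ ∂F}`. -/
noncomputable def qNval (d N m : ℕ) (Pl : Cyl d N → Measure (ℕ → Cyl d N)) (j : ℤ) : ℝ :=
  sSup {r : ℝ | ∃ F ∈ Lcoll d N m, ∃ z ∈ bdry d N F,
      r = ((Pl z) {ω | entT F ω < exitT (Btl d N j) ω}).toReal}

/-- The times `τ_k`: `τ_0` is the entrance time of `(ℤ/Nℤ)^d × Nℤ`, and `τ_{k+1}` is the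
first time after `τ_k` at which the vertical component has moved by exactly `N`. -/
noncomputable def tauT (d N : ℕ) : ℕ → (ℕ → Cyl d N) → ℕ∞
  | 0, ω => entT {x : Cyl d N | (N : ℤ) ∣ x.2} ω
  | k + 1, ω =>
      (tauT d N k ω).recTopCoe ⊤ fun m =>
        sInf {t : ℕ∞ | ∃ n : ℕ, m < n ∧ ((ω n).2 - (ω m).2).natAbs = N ∧ t = n}

/-- `*`-adjacency on `ℤ²`. -/
def starAdj (x y : ℤ × ℤ) : Prop :=
  x ≠ y ∧ (x.1 - y.1).natAbs ≤ 1 ∧ (x.2 - y.2).natAbs ≤ 1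

/-!
Let `A` be a set of `m` points of a plane of the cylinder. Up to a factor for each excursion, the
probability of covering the `k` points of `A` that remain is at most `θ ^ k * ψ(X_n)`, where `ψ ≥ 1`
is superharmonic and is contracted by the factor `θ` in one step from `A`. Such a `ψ` is obtained
from the probability that a simple random walk on `ℤ^{d-1}`, the projection of the walk transverse
to the plane, hits the origin: a step from the plane stays in it with probability `2/(d+1)`, and
otherwise the walk comes back to it with probability about `q(d-1)`. Hence `A` is covered with
probability at most a constant times `θ ^ m` and a factor for each excursion, for any `θ` above
`2/(d+1) + (1 - 2/(d+1)) q(d-1)`.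

If the event `U` fails, two large connected sets of a plane are separated by the visited set. By
planar duality, here in terms of `ℤ/2`-valued cochains on a periodic strip, the visited set then
contains a `*`-path whose length is of order `log N`. There are of order `N^{d+1} 7^m` such paths
with `m` points, so the choice of `c₀` makes the union bound smaller than `N^{-2d}`.
-/

/-! ### The Markov property -/

section MarkovProperty

variable {S : Type*}

/-- The shift by one unit of time on the space of paths. -/
def shiftPath (ω : ℕ → S) : ℕ → S := fun n => ω (n + 1)

/-- `P` is the family of laws, indexed by the starting point, of the Markov chain with transition
probabilities `p`; the law is prescribed on the events fixing an initial segment of the path. -/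
def IsChainLaw [MeasurableSpace S] (p : S → S → ℝ≥0∞) (P : S → Measure (ℕ → S)) : Prop :=
  (∀ x, IsProbabilityMeasure (P x)) ∧
    ∀ (x : S) (n : ℕ) (γ : ℕ → S),
      P x {ω | ∀ i ≤ n, ω i = γ i} =
        (if γ 0 = x then 1 else 0) * ∏ i ∈ Finset.range n, p (γ i) (γ (i + 1))

lemma measurable_shiftPath [MeasurableSpace S] : Measurable (shiftPath : (ℕ → S) → ℕ → S) :=
  measurable_pi_lambda _ fun n => measurable_pi_apply (n + 1)

lemma IsChainLaw.measure_initial [MeasurableSpace S] {p : S → S → ℝ≥0∞}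
    {P : S → Measure (ℕ → S)} (h : IsChainLaw p P) (n : ℕ) (γ : ℕ → S) :
    P (γ 0) {ω | ∀ i ≤ n, ω i = γ i} = ∏ i ∈ Finset.range n, p (γ i) (γ (i + 1)) := by
  simpa using h.2 (γ 0) n γ

variable [MeasurableSpace S] [MeasurableSingletonClass S] [Countable S]

lemma measurableSet_initial (n : ℕ) (γ : ℕ → S) :
    MeasurableSet {ω : ℕ → S | ∀ i ≤ n, ω i = γ i} := by
  simp only [Set.ofPred_forall]
  exact MeasurableSet.iInter fun i => MeasurableSet.iInter fun _ =>
    measurableSet_eq_fun (measurable_pi_apply i) measurable_const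

lemma measure_ext_of_initial {μ ν : Measure (ℕ → S)} [IsFiniteMeasure ν]
    (h : ∀ (n : ℕ) (γ : ℕ → S),
      μ {ω | ∀ i ≤ n, ω i = γ i} = ν {ω | ∀ i ≤ n, ω i = γ i}) : μ = ν := by
  let F : (I : Finset ℕ) → Measure ((i : I) → S) := fun I => ν.map I.restrict
  have hF : IsProjectiveMeasureFamily (α := fun _ : ℕ => S) F := fun I J hJI => by
    rw [Measure.map_map (Finset.measurable_restrict₂ hJI) (Finset.measurable_restrict I),
      Finset.restrict₂_comp_restrict]
  refine IsProjectiveLimit.unique (P := F) ?_ fun I => rfl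
  rw [isProjectiveLimit_nat_iff hF]
  refine fun n => Measure.ext_of_singleton fun a => ?_
  let γ : ℕ → S := fun i => a ⟨min i n, Finset.mem_Iic.2 (min_le_right i n)⟩
  have hγ : Preorder.frestrictLe (π := fun _ => S) n ⁻¹' {a} =
      {ω : ℕ → S | ∀ i ≤ n, ω i = γ i} := by
    ext ω
    simp only [Set.mem_preimage, Set.mem_singleton_iff, funext_iff, Subtype.forall,
      Finset.mem_Iic, Preorder.frestrictLe_apply, Set.mem_ofPred_eq, γ]
    exact forall₂_congr fun i hi => by simp only [min_eq_left hi]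
  rw [Measure.map_apply (Preorder.measurable_frestrictLe n) (measurableSet_singleton a), hγ, h n γ,
    ← hγ, ← Measure.map_apply (Preorder.measurable_frestrictLe n) (measurableSet_singleton a)]
  rfl

variable {p : S → S → ℝ≥0∞} {P : S → Measure (ℕ → S)}

namespace IsChainLaw

lemma ae_start (h : IsChainLaw p P) (x : S) : ∀ᵐ ω ∂P x, ω 0 = x := by
  have := h.1 x
  have hone : P x {ω | ω 0 = x} = 1 := by simpa using h.2 x 0 fun _ => x
  exact (prob_compl_eq_zero_iff (measurableSet_eq_fun (measurable_pi_apply 0)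
    measurable_const)).2 hone

lemma measureReal_le_of_start (h : IsChainLaw p P) {x : S} {E E' : Set (ℕ → S)}
    (hE : ∀ ω ∈ E, ω 0 = x → ω ∈ E') : (P x).real E ≤ (P x).real E' := by
  have := h.1
  refine ENNReal.toReal_mono (measure_ne_top _ _) (measure_mono_ae ?_)
  filter_upwards [h.ae_start x] with ω hω hmem using hE ω hmem hω

lemma measure_shift_initial (h : IsChainLaw p P) (x : S) (n : ℕ) (γ : ℕ → S) :
    P x (shiftPath ⁻¹' {ω | ∀ i ≤ n, ω i = γ i}) =
      p x (γ 0) * ∏ i ∈ Finset.range n, p (γ i) (γ (i + 1)) := by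
  let δ : ℕ → S := fun k => Nat.casesOn k x γ
  have hδ := h.measure_initial (n + 1) δ
  rw [Finset.prod_range_succ', mul_comm] at hδ
  refine Eq.trans (measure_congr ?_) hδ
  filter_upwards [h.ae_start x] with ω hω
  refine propext ⟨fun hi i hin => ?_, fun hi i hin => hi (i + 1) (by omega)⟩
  cases i with
  | zero => exact hω
  | succ i => exact hi i (by omega)

lemma map_shiftPath (h : IsChainLaw p P) (x : S) :
    (P x).map shiftPath = Measure.sum fun y => p x y • P y := by
  have := h.1
  symm
  have := Measure.isProbabilityMeasure_map (μ := P x) measurable_shiftPath.aemeasurable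
  refine measure_ext_of_initial fun n γ => ?_
  rw [Measure.map_apply measurable_shiftPath (measurableSet_initial n γ),
    h.measure_shift_initial x n γ, Measure.sum_apply _ (measurableSet_initial n γ),
    tsum_eq_single (γ 0)]
  · rw [Measure.smul_apply, h.measure_initial, smul_eq_mul]
  · intro y hy
    rw [Measure.smul_apply, h.2, if_neg hy.symm, zero_mul, smul_zero]

end IsChainLaw

end MarkovProperty

/-! ### Walks on the lattice and on the cylinder -/

section NeighbourAverage

variable {V ι : Type*} [AddCommGroup V] [Fintype ι]

/-- The average of `f` over the `2 |ι|` neighbours `z ± e i` of `z`, counted with multiplicity. -/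
noncomputable def nbrAvg (e : ι → V) (f : V → ℝ) (z : V) : ℝ :=
  (∑ i, (f (z + e i) + f (z - e i))) / (2 * Fintype.card ι)

/-- The transition probabilities of the walk with steps uniform on the `± e i`, counted with
multiplicity. -/
noncomputable def nbrStep (e : ι → V) (x y : V) : ℝ≥0∞ :=
  (∑ i, ((if x + e i = y then 1 else 0) + if x - e i = y then 1 else 0)) / (2 * Fintype.card ι)

variable {e : ι → V} {f g : V → ℝ} {z : V}

lemma nbrAvg_mono (hadd : ∀ i, f (z + e i) ≤ g (z + e i)) (hsub : ∀ i, f (z - e i) ≤ g (z - e i)) :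
    nbrAvg e f z ≤ nbrAvg e g z := by
  unfold nbrAvg
  gcongr with i
  exacts [hadd i, hsub i]

lemma nbrAvg_add (f g : V → ℝ) (z : V) :
    nbrAvg e (fun y => f y + g y) z = nbrAvg e f z + nbrAvg e g z := by
  simp only [nbrAvg, ← add_div, ← Finset.sum_add_distrib]
  congr! 2
  ring

lemma nbrAvg_const_mul (c : ℝ) (f : V → ℝ) (z : V) :
    nbrAvg e (fun y => c * f y) z = c * nbrAvg e f z := by
  simp only [nbrAvg, ← mul_add, ← Finset.mul_sum, mul_div_assoc]

lemma nbrAvg_sum {κ : Type*} (A : Finset κ) (h : κ → V → ℝ) (z : V) :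
    nbrAvg e (fun y => ∑ x ∈ A, h x y) z = ∑ x ∈ A, nbrAvg e (h x) z := by
  simp only [nbrAvg, ← Finset.sum_div, ← Finset.sum_add_distrib]
  rw [Finset.sum_comm]

lemma nbrAvg_min_le (f g : V → ℝ) (z : V) :
    nbrAvg e (fun y => min (f y) (g y)) z ≤ min (nbrAvg e f z) (nbrAvg e g z) :=
  le_min (nbrAvg_mono (fun _ => min_le_left _ _) fun _ => min_le_left _ _)
    (nbrAvg_mono (fun _ => min_le_right _ _) fun _ => min_le_right _ _)

lemma nbrAvg_comp_sub (f : V → ℝ) (x z : V) :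
    nbrAvg e (fun y => f (y - x)) z = nbrAvg e f (z - x) := by
  simp only [nbrAvg, add_sub_right_comm, sub_right_comm]

lemma nbrAvg_const [Nonempty ι] (c : ℝ) (z : V) : nbrAvg e (fun _ => c) z = c := by
  have hcard : (Fintype.card ι : ℝ) ≠ 0 := Nat.cast_ne_zero.2 Fintype.card_ne_zero
  simp only [nbrAvg, Finset.sum_const, Finset.card_univ, nsmul_eq_mul]
  field_simp
  norm_num

lemma tsum_nbrStep_mul (x : V) (F : V → ℝ≥0∞) :
    ∑' y, nbrStep e x y * F y =
      (∑ i, (F (x + e i) + F (x - e i))) / (2 * Fintype.card ι) := by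
  have hterm : ∀ y, nbrStep e x y * F y =
      (∑ i, ((if y = x + e i then F y else 0) + if y = x - e i then F y else 0)) *
        (2 * Fintype.card ι : ℝ≥0∞)⁻¹ := fun y => by
    rw [nbrStep, div_eq_mul_inv, mul_right_comm, Finset.sum_mul]
    simp only [add_mul, ite_mul, one_mul, zero_mul, eq_comm]
  simp_rw [hterm]
  rw [ENNReal.tsum_mul_right, Summable.tsum_finsetSum fun _ _ => ENNReal.summable, div_eq_mul_inv]
  simp only [ENNReal.tsum_add, tsum_ite_eq]

namespace IsChainLaw

variable [MeasurableSpace V] [MeasurableSingletonClass V] [Countable V]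
  {P : V → Measure (ℕ → V)}

lemma map_shiftPath_apply (h : IsChainLaw (nbrStep e) P) (x : V) (E : Set (ℕ → V)) :
    (P x).map shiftPath E =
      (∑ i, (P (x + e i) E + P (x - e i) E)) / (2 * Fintype.card ι) := by
  rw [h.map_shiftPath x, Measure.sum_apply_of_countable]
  exact tsum_nbrStep_mul x fun y => P y E

lemma toReal_map_shiftPath (h : IsChainLaw (nbrStep e) P) (x : V) (E : Set (ℕ → V)) :
    ((P x).map shiftPath E).toReal = nbrAvg e (fun y => (P y).real E) x := by
  have := h.1
  rw [h.map_shiftPath_apply, ENNReal.toReal_div, ENNReal.toReal_sum fun i _ =>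
    ENNReal.add_ne_top.2 ⟨measure_ne_top _ _, measure_ne_top _ _⟩]
  simp only [ENNReal.toReal_add (measure_ne_top _ _) (measure_ne_top _ _), nbrAvg,
    measureReal_def, ENNReal.toReal_mul, ENNReal.toReal_ofNat, ENNReal.toReal_natCast]

lemma real_shiftPath_preimage_le (h : IsChainLaw (nbrStep e) P) (x : V) (E : Set (ℕ → V)) :
    (P x).real (shiftPath ⁻¹' E) ≤ nbrAvg e (fun y => (P y).real E) x := by
  have := h.1
  have := Measure.isProbabilityMeasure_map (μ := P x) measurable_shiftPath.aemeasurable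
  rw [← h.toReal_map_shiftPath]
  exact ENNReal.toReal_mono (measure_ne_top _ _)
    (Measure.le_map_apply measurable_shiftPath.aemeasurable E)

lemma real_shiftPath_preimage (h : IsChainLaw (nbrStep e) P) (x : V) {E : Set (ℕ → V)}
    (hE : MeasurableSet E) :
    (P x).real (shiftPath ⁻¹' E) = nbrAvg e (fun y => (P y).real E) x := by
  rw [← h.toReal_map_shiftPath, Measure.map_apply measurable_shiftPath hE, measureReal_def]

end IsChainLaw

end NeighbourAverage

section LatticeWalk

variable {ν : ℕ} {Q : ZLat ν → Measure (ℕ → ZLat ν)}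

/-- The standard basis of `ℤ^ν`, as a family of steps. -/
def latStep (ν : ℕ) (i : Fin ν) : ZLat ν := Pi.single i 1

/-- The unit vectors `± e_i`, indexed by a direction and a sign as in `unitVecs`. -/
def signedUnit (p : Fin ν × Bool) : ZLat ν := Pi.single p.1 (if p.2 then 1 else -1)

lemma signedUnit_true (i : Fin ν) : signedUnit (i, true) = latStep ν i := by
  simp [signedUnit, latStep]

lemma signedUnit_false (i : Fin ν) : signedUnit (i, false) = -latStep ν i := by
  simp [signedUnit, latStep, Pi.single_neg]

lemma signedUnit_injective : Function.Injective (signedUnit (ν := ν)) := by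
  rintro ⟨i, a⟩ ⟨k, b⟩ h
  have hi := congrFun h i
  have hk := congrFun h k
  cases a <;> cases b <;> by_cases hik : i = k <;>
    simp_all [signedUnit, eq_comm]

lemma mem_zUnitVecs_iff {v : ZLat ν} : v ∈ zUnitVecs ν ↔ ∃ p, signedUnit p = v := by
  simp [zUnitVecs, signedUnit, @eq_comm _ v, or_comm]

lemma zStep_eq_nbrStep (x y : ZLat ν) : zStep ν x y = nbrStep (latStep ν) x y := by
  have hcount : (if y - x ∈ zUnitVecs ν then 1 else 0 : ℝ≥0∞) =
      ∑ p : Fin ν × Bool, if x + signedUnit p = y then 1 else 0 := by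
    simp only [← eq_sub_iff_add_eq', mem_zUnitVecs_iff]
    split_ifs with h
    · obtain ⟨p, hp⟩ := h
      simp [← hp, signedUnit_injective.eq_iff]
    · exact (Finset.sum_eq_zero fun p _ => if_neg fun hp => h ⟨p, hp⟩).symm
  rw [Fintype.sum_prod_type] at hcount
  simp only [Fintype.sum_bool, signedUnit_true, signedUnit_false, ← sub_eq_add_neg] at hcount
  have hstep : nbrStep (latStep ν) x y =
      (if y - x ∈ zUnitVecs ν then 1 else 0 : ℝ≥0∞) / (2 * ν) := by
    rw [hcount, nbrStep, Fintype.card_fin]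
    congr!
  rw [hstep, zStep]
  split_ifs <;> simp

lemma IsLatRW.isChainLaw (hQ : IsLatRW ν Q) : IsChainLaw (nbrStep (latStep ν)) Q := by
  refine ⟨hQ.1, fun x n γ => ?_⟩
  rw [hQ.2 x n γ]
  congr! 3
  exact funext₂ zStep_eq_nbrStep

/-- The probability that the walk started at `y` ever visits the origin. -/
noncomputable def hitProb (Q : ZLat ν → Measure (ℕ → ZLat ν)) (y : ZLat ν) : ℝ :=
  (Q y).real {ω | ∃ n, ω n = 0}

lemma hitProb_nonneg (y : ZLat ν) : 0 ≤ hitProb Q y := measureReal_nonneg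

lemma measurableSet_hit : MeasurableSet {ω : ℕ → ZLat ν | ∃ n, ω n = 0} := by
  simp only [Set.ofPred_exists]
  exact MeasurableSet.iUnion fun n => measurableSet_eq_fun (measurable_pi_apply n) measurable_const

lemma hitProb_zero (hQ : IsLatRW ν Q) : hitProb Q 0 = 1 := by
  have := hQ.1
  refine le_antisymm measureReal_le_one ?_
  have h := hQ.isChainLaw.measureReal_le_of_start (x := 0) (E := Set.univ)
    (E' := {ω | ∃ n, ω n = 0}) fun ω _ h0 => ⟨0, h0⟩
  rwa [probReal_univ] at h

lemma nbrAvg_hitProb_le (hQ : IsLatRW ν Q) (y : ZLat ν) :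
    nbrAvg (latStep ν) (hitProb Q) y ≤ hitProb Q y := by
  have := hQ.1
  refine (hQ.isChainLaw.real_shiftPath_preimage y measurableSet_hit).symm.le.trans
    (measureReal_mono ?_)
  rintro ω ⟨n, hn⟩
  exact ⟨n + 1, hn⟩

lemma nbrAvg_hitProb_zero (hQ : IsLatRW ν Q) :
    nbrAvg (latStep ν) (hitProb Q) 0 = retProb ν Q := by
  refine (hQ.isChainLaw.real_shiftPath_preimage 0 measurableSet_hit).symm.trans ?_
  have hret : shiftPath ⁻¹' {ω : ℕ → ZLat ν | ∃ n, ω n = 0} = {ω | ∃ n, 1 ≤ n ∧ ω n = 0} := by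
    ext ω
    constructor
    · rintro ⟨n, hn⟩
      exact ⟨n + 1, by omega, hn⟩
    · rintro ⟨n, hn, h0⟩
      obtain ⟨m, rfl⟩ := Nat.exists_eq_add_of_le' hn
      exact ⟨m, h0⟩
  rw [hret]
  rfl

end LatticeWalk

section CylinderWalk

variable {d N : ℕ}

lemma projE_add (v w : Lat d) : projE d N (v + w) = projE d N v + projE d N w := by
  ext <;> simp [projE]

/-- The projection `π_E` as a group homomorphism. -/
def projHom (d N : ℕ) : Lat d →+ Cyl d N := AddMonoidHom.mk' (projE d N) projE_add

lemma projE_neg (v : Lat d) : projE d N (-v) = -projE d N v := map_neg (projHom d N) v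

/-- The projections to the cylinder of the `d + 1` canonical basis vectors. -/
def cylStep (d N : ℕ) (i : Fin (d + 1)) : Cyl d N := projE d N (latStep (d + 1) i)

lemma stepProb_eq_nbrStep (x y : Cyl d N) : stepProb d N x y = nbrStep (cylStep d N) x y := by
  have hunit : unitVecs d = Finset.univ.image signedUnit := rfl
  have hcount : (((unitVecs d).filter fun v => x + projE d N v = y).card : ℝ≥0∞) =
      ∑ p : Fin (d + 1) × Bool, if x + projE d N (signedUnit p) = y then 1 else 0 := by
    rw [hunit, Finset.filter_image, Finset.card_image_of_injective _ signedUnit_injective,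
      Finset.card_filter]
    push_cast
    rfl
  rw [Fintype.sum_prod_type] at hcount
  simp only [Fintype.sum_bool, signedUnit_true, signedUnit_false, projE_neg, ← sub_eq_add_neg]
    at hcount
  rw [stepProb, hcount, nbrStep, Fintype.card_fin]
  push_cast
  congr!

lemma IsCylRW.isChainLaw {Pl : Cyl d N → Measure (ℕ → Cyl d N)} (h : IsCylRW d N Pl) :
    IsChainLaw (nbrStep (cylStep d N)) Pl := by
  refine ⟨h.1, fun x n γ => ?_⟩
  rw [h.2 x n γ]
  congr! 3
  exact funext₂ stepProb_eq_nbrStep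

lemma abs_cylStep_snd_le (i : Fin (d + 1)) : |(cylStep d N i).2| ≤ 1 := by
  simp only [cylStep, projE, latStep, Pi.single_apply]
  split_ifs <;> simp

lemma nbrAvg_mono_of_height {f g : Cyl d N → ℝ} {z : Cyl d N}
    (h : ∀ y : Cyl d N, |y.2 - z.2| ≤ 1 → f y ≤ g y) :
    nbrAvg (cylStep d N) f z ≤ nbrAvg (cylStep d N) g z :=
  nbrAvg_mono (fun i => h _ (by simpa using abs_cylStep_snd_le i))
    fun i => h _ (by simpa using abs_cylStep_snd_le i)

end CylinderWalk

/-! ### The covering supermartingale -/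

section ExcursionTimes

variable {S : Type*}

lemma entT_of_mem {U : Set S} {ω : ℕ → S} (h : ω 0 ∈ U) : entT U ω = 0 :=
  le_antisymm (sInf_le ⟨0, h, rfl⟩) bot_le

lemma entT_of_notMem {U : Set S} {ω : ℕ → S} (h : ω 0 ∉ U) :
    entT U ω = entT U (shiftPath ω) + 1 := by
  apply le_antisymm
  · rw [entT, entT, ENat.sInf_add]
    refine le_iInf₂ ?_
    rintro _ ⟨n, hn, rfl⟩
    exact sInf_le ⟨n + 1, hn, by simp⟩
  · refine le_sInf ?_
    rintro _ ⟨n, hn, rfl⟩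
    obtain ⟨m, rfl⟩ := Nat.exists_eq_succ_of_ne_zero fun h0 : n = 0 => h (h0 ▸ hn)
    push_cast
    gcongr
    exact sInf_le ⟨m, hn, rfl⟩

lemma after_coe (m : ℕ) (f : (ℕ → S) → ℕ∞) (ω : ℕ → S) :
    after m f ω = m + f fun k => ω (k + m) := rfl

lemma after_zero (f : (ℕ → S) → ℕ∞) (ω : ℕ → S) : after 0 f ω = f ω :=
  (after_coe 0 f ω).trans (zero_add _)

lemma after_add_one (t : ℕ∞) (f : (ℕ → S) → ℕ∞) (ω : ℕ → S) :
    after (t + 1) f ω = after t f (shiftPath ω) + 1 := by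
  induction t using ENat.recTopCoe with
  | top => rfl
  | coe m =>
    rw [after_coe, add_right_comm]
    exact after_coe (m + 1) f ω

lemma after_after (t : ℕ∞) (f g : (ℕ → S) → ℕ∞) (ω : ℕ → S) :
    after (after t f ω) g ω = after t (fun η => after (f η) g η) ω := by
  induction t using ENat.recTopCoe with
  | top => rfl
  | coe m =>
    rw [after_coe, after_coe]
    generalize f (fun k => ω (k + m)) = s
    induction s using ENat.recTopCoe with
    | top => exact (add_top _).symm
    | coe l =>
      rw [← Nat.cast_add, after_coe, after_coe, Nat.cast_add, add_assoc]
      simp only [← add_assoc, add_right_comm]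

variable {d N : ℕ} {j : ℤ} {k : ℕ} {ω : ℕ → Cyl d N}

/-- The time of the `k`-th departure from `B̃_j` counted from the first exit from `B̃_j`. It is the
time left until the `(k+1)`-st departure for a walk which has just returned to `B_j`. -/
noncomputable def DDAfterExit (d N : ℕ) (j : ℤ) (k : ℕ) (ω : ℕ → Cyl d N) : ℕ∞ :=
  after (exitT (Btl d N j) ω) (DD d N j k) ω

lemma DD_succ_eq_after_oneExc (j : ℤ) (k : ℕ) (ω : ℕ → Cyl d N) :
    DD d N j (k + 1) ω = after (oneExc d N j ω) (DD d N j k) ω := by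
  induction k generalizing ω with
  | zero =>
    refine (after_zero _ ω).trans ?_
    generalize hs : oneExc d N j ω = s
    induction s using ENat.recTopCoe with
    | top => rfl
    | coe l => exact (add_zero _).symm
  | succ k ih =>
    change after (DD d N j (k + 1) ω) (oneExc d N j) ω = _
    rw [ih, after_after]
    rfl

lemma DD_succ_eq_after_entT (j : ℤ) (k : ℕ) (ω : ℕ → Cyl d N) :
    DD d N j (k + 1) ω = after (entT (Bblk d N j) ω) (DDAfterExit d N j k) ω := by
  rw [DD_succ_eq_after_oneExc, oneExc, after_after]
  rfl

lemma DD_succ_of_mem (h : ω 0 ∈ Bblk d N j) : DD d N j (k + 1) ω = DDAfterExit d N j k ω := by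
  rw [DD_succ_eq_after_entT, entT_of_mem h, after_zero]

lemma DD_succ_of_notMem (h : ω 0 ∉ Bblk d N j) :
    DD d N j (k + 1) ω = DD d N j (k + 1) (shiftPath ω) + 1 := by
  rw [DD_succ_eq_after_entT, entT_of_notMem h, after_add_one, ← DD_succ_eq_after_entT]

lemma DDAfterExit_of_notMem (h : ω 0 ∉ Btl d N j) : DDAfterExit d N j k ω = DD d N j k ω := by
  rw [DDAfterExit, exitT, entT_of_mem h, after_zero]

lemma DDAfterExit_of_mem (h : ω 0 ∈ Btl d N j) :
    DDAfterExit d N j k ω = DDAfterExit d N j k (shiftPath ω) + 1 := by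
  rw [DDAfterExit, exitT, entT_of_notMem (Set.notMem_compl_iff.2 h), after_add_one]
  rfl

lemma mem_Bblk_iff {z : Cyl d N} : z ∈ Bblk d N j ↔ |z.2 - j * N| ≤ N := by
  simp only [Bblk, Set.mem_ofPred_eq, abs_le]
  constructor <;> rintro ⟨h, h'⟩ <;> constructor <;> linarith

lemma mem_Btl_iff {z : Cyl d N} : z ∈ Btl d N j ↔ |z.2 - j * N| < 2 * N := by
  simp only [Btl, Set.mem_ofPred_eq, abs_lt]
  constructor <;> rintro ⟨h, h'⟩ <;> constructor <;> linarith

end ExcursionTimes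

section CoveringEstimate

variable {d N : ℕ} {j : ℤ}

/-- The event that every point of `A` is visited strictly before time `n` and not after the time
`τ`. -/
def coveredBefore (τ : (ℕ → Cyl d N) → ℕ∞) (n : ℕ) (A : Finset (Cyl d N)) :
    Set (ℕ → Cyl d N) :=
  {ω | ∀ x ∈ A, ∃ i < n, (i : ℕ∞) ≤ τ ω ∧ ω i = x}

lemma coveredBefore_of_le {τ σ : (ℕ → Cyl d N) → ℕ∞} {n : ℕ} {A : Finset (Cyl d N)}
    {ω : ℕ → Cyl d N} (h : τ ω ≤ σ ω) (hω : ω ∈ coveredBefore τ n A) :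
    ω ∈ coveredBefore σ n A := fun x hx =>
  let ⟨i, hin, hi, hix⟩ := hω x hx
  ⟨i, hin, hi.trans h, hix⟩

lemma coveredBefore_zero {τ : (ℕ → Cyl d N) → ℕ∞} {A : Finset (Cyl d N)} (hA : A.Nonempty) :
    coveredBefore τ 0 A = ∅ :=
  Set.eq_empty_of_forall_notMem fun _ h =>
    let ⟨x, hx⟩ := hA
    let ⟨_, hi, _⟩ := h x hx
    absurd hi (Nat.not_lt_zero _)

lemma shiftPath_mem_coveredBefore {τ σ : (ℕ → Cyl d N) → ℕ∞} {n : ℕ} {A : Finset (Cyl d N)}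
    {ω : ℕ → Cyl d N} (hτ : τ ω = σ (shiftPath ω) + 1) (h : ω ∈ coveredBefore τ (n + 1) A) :
    shiftPath ω ∈ coveredBefore σ n (A.erase (ω 0)) := by
  intro x hx
  obtain ⟨hx0, hxA⟩ := Finset.mem_erase.1 hx
  obtain ⟨i, hin, hiτ, hix⟩ := h x hxA
  obtain ⟨i, rfl⟩ := Nat.exists_eq_succ_of_ne_zero fun h0 : i = 0 => hx0 (h0 ▸ hix).symm
  refine ⟨i, by omega, ?_, hix⟩
  rw [hτ, Nat.cast_succ] at hiτ
  exact (ENat.add_le_add_iff_right (by simp)).1 hiτ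

lemma real_coveredBefore_succ_le {Pl : Cyl d N → Measure (ℕ → Cyl d N)} (hPl : IsCylRW d N Pl)
    {τ σ : (ℕ → Cyl d N) → ℕ∞} {n : ℕ} {A : Finset (Cyl d N)} {z : Cyl d N}
    (hτ : ∀ ω, ω 0 = z → τ ω = σ (shiftPath ω) + 1) :
    (Pl z).real (coveredBefore τ (n + 1) A) ≤
      nbrAvg (cylStep d N) (fun y => (Pl y).real (coveredBefore σ n (A.erase z))) z := by
  refine (hPl.isChainLaw.measureReal_le_of_start
    (E' := shiftPath ⁻¹' coveredBefore σ n (A.erase z)) fun ω hω h0 => ?_).trans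
      (hPl.isChainLaw.real_shiftPath_preimage_le z _)
  exact h0 ▸ shiftPath_mem_coveredBefore (hτ ω h0) hω

/-- A covering weight for `A`: a function bounded below by `1` on the closure of `B̃_j`, which is
superharmonic, is contracted by the factor `θ` in one step from `A`, and is at most `β` on the
boundary of `B_j`. The walk then pays a factor `θ` for each point of `A` that it covers and gains
at most a factor `β` for each return to `B_j`. -/
structure IsCoverWeight (d N : ℕ) (j : ℤ) (A : Finset (Cyl d N)) (θ β : ℝ) (ψ : Cyl d N → ℝ) :
    Prop where
  one_le : ∀ z : Cyl d N, |z.2 - j * N| ≤ 2 * N → 1 ≤ ψ z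
  superharmonic : ∀ z, nbrAvg (cylStep d N) ψ z ≤ ψ z
  contract : ∀ z ∈ A, nbrAvg (cylStep d N) ψ z ≤ θ * ψ z
  le_entrance : ∀ z : Cyl d N, |z.2 - j * N| = N → ψ z ≤ β

variable {Pl : Cyl d N → Measure (ℕ → Cyl d N)} {A : Finset (Cyl d N)} {θ β : ℝ}
  {ψ : Cyl d N → ℝ}

lemma real_covered_DD_zero_le (hPl : IsCylRW d N Pl) (hA : ∀ x ∈ A, |x.2 - j * N| < N)
    {A' : Finset (Cyl d N)} (hA' : A' ⊆ A) (hθ : 0 ≤ θ) (n : ℕ)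
    {z : Cyl d N} (hz : N ≤ |z.2 - j * N|) :
    (Pl z).real (coveredBefore (DD d N j 0) n A') ≤ θ ^ A'.card := by
  have := hPl.1
  rcases A'.eq_empty_or_nonempty with rfl | ⟨x, hx⟩
  · simp
  · refine (hPl.isChainLaw.measureReal_le_of_start (E' := ∅) fun ω hω h0 => ?_).trans ?_
    · obtain ⟨i, -, hi, hix⟩ := hω x hx
      obtain rfl : i = 0 := Nat.cast_eq_zero.1 (le_zero_iff.1 hi)
      exact absurd (hA x (hA' hx)) (hix ▸ h0 ▸ hz).not_gt
    · rw [measureReal_empty]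
      positivity

namespace IsCoverWeight

lemma nbrAvg_card_erase_le (hψ : IsCoverWeight d N j A θ β ψ) (hθ : 0 ≤ θ) {A' : Finset (Cyl d N)}
    (hA' : A' ⊆ A) (z : Cyl d N) :
    θ ^ (A'.erase z).card * nbrAvg (cylStep d N) ψ z ≤ θ ^ A'.card * ψ z := by
  by_cases hz : z ∈ A'
  · rw [← Finset.card_erase_add_one hz, pow_succ, mul_assoc]
    exact mul_le_mul_of_nonneg_left (hψ.contract z (hA' hz)) (by positivity)
  · rw [Finset.erase_eq_of_notMem hz]
    exact mul_le_mul_of_nonneg_left (hψ.superharmonic z) (by positivity)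

lemma real_covered_DDAfterExit_le (hψ : IsCoverWeight d N j A θ β ψ) (hPl : IsCylRW d N Pl)
    (hN : 1 ≤ N) (hθ : 0 ≤ θ) (hβ : 1 ≤ β) {k : ℕ}
    (hDD : ∀ A' ⊆ A, ∀ n, ∀ z : Cyl d N, N ≤ |z.2 - j * N| →
      (Pl z).real (coveredBefore (DD d N j k) n A') ≤ θ ^ A'.card * β ^ k) (n : ℕ) :
    ∀ A' ⊆ A, ∀ z : Cyl d N, |z.2 - j * N| ≤ 2 * N →
      (Pl z).real (coveredBefore (DDAfterExit d N j k) n A') ≤ θ ^ A'.card * ψ z * β ^ k := by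
  have := hPl.1
  have hβk : 1 ≤ β ^ k := one_le_pow₀ hβ
  induction n with
  | zero =>
    intro A' _ z hz
    have hψz := hψ.one_le z hz
    rcases A'.eq_empty_or_nonempty with rfl | hne
    · simpa using measureReal_le_one.trans (one_le_mul_of_one_le_of_one_le hψz hβk)
    · rw [coveredBefore_zero hne, measureReal_empty]
      positivity
  | succ n ih =>
    intro A' hA' z hz
    by_cases hzB : z ∈ Btl d N j
    · have hz2 := mem_Btl_iff.1 hzB
      refine (real_coveredBefore_succ_le hPl
        fun ω h0 => DDAfterExit_of_mem (h0 ▸ hzB)).trans ?_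
      refine (nbrAvg_mono_of_height (g := fun y => θ ^ (A'.erase z).card * β ^ k * ψ y)
        fun y hy => ?_).trans ?_
      · refine (ih _ ((Finset.erase_subset _ _).trans hA') y ?_).trans_eq (by ring)
        rw [abs_lt] at hz2
        rw [abs_le] at hy ⊢
        omega
      · rw [nbrAvg_const_mul, mul_right_comm]
        exact mul_le_mul_of_nonneg_right (hψ.nbrAvg_card_erase_le hθ hA' z) (by positivity)
    · have hz2 : N ≤ |z.2 - j * N| := by rw [mem_Btl_iff] at hzB; omega
      refine (hPl.isChainLaw.measureReal_le_of_start (E' := coveredBefore (DD d N j k) (n + 1) A')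
        fun ω hω h0 => coveredBefore_of_le (DDAfterExit_of_notMem (h0 ▸ hzB)).le hω).trans
          ((hDD A' hA' (n + 1) z hz2).trans ?_)
      exact mul_le_mul_of_nonneg_right
        (le_mul_of_one_le_right (by positivity) (hψ.one_le z hz)) (by positivity)

lemma real_covered_DD_succ_le (hψ : IsCoverWeight d N j A θ β ψ) (hPl : IsCylRW d N Pl)
    (hN : 1 ≤ N) (hA : ∀ x ∈ A, |x.2 - j * N| < N) (hθ : 0 ≤ θ) (hβ : 1 ≤ β) {k : ℕ}
    (hexit : ∀ n, ∀ A' ⊆ A, ∀ z : Cyl d N, |z.2 - j * N| ≤ 2 * N →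
      (Pl z).real (coveredBefore (DDAfterExit d N j k) n A') ≤ θ ^ A'.card * ψ z * β ^ k) (n : ℕ) :
    ∀ A' ⊆ A, ∀ z : Cyl d N, N ≤ |z.2 - j * N| →
      (Pl z).real (coveredBefore (DD d N j (k + 1)) n A') ≤ θ ^ A'.card * β ^ (k + 1) := by
  have := hPl.1
  induction n with
  | zero =>
    intro A' _ z _
    rcases A'.eq_empty_or_nonempty with rfl | hne
    · simpa using measureReal_le_one.trans (one_le_pow₀ hβ)
    · rw [coveredBefore_zero hne, measureReal_empty]
      positivity
  | succ n ih =>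
    intro A' hA' z hz
    rcases hz.lt_or_eq with hlt | heq
    · have hzB : z ∉ Bblk d N j := by rw [mem_Bblk_iff]; omega
      have hzA : z ∉ A' := fun h => absurd (hA z (hA' h)) hz.not_gt
      refine (real_coveredBefore_succ_le hPl fun ω h0 => DD_succ_of_notMem (h0 ▸ hzB)).trans ?_
      rw [Finset.erase_eq_of_notMem hzA]
      refine (nbrAvg_mono_of_height fun y hy => ih A' hA' y ?_).trans_eq (nbrAvg_const _ z)
      rw [lt_abs] at hlt
      rw [abs_le] at hy
      rw [le_abs]
      omega
    · have hzB : z ∈ Bblk d N j := mem_Bblk_iff.2 heq.ge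
      refine (hPl.isChainLaw.measureReal_le_of_start
        (E' := coveredBefore (DDAfterExit d N j k) (n + 1) A')
        fun ω hω h0 => coveredBefore_of_le (DD_succ_of_mem (h0 ▸ hzB)).le hω).trans
          ((hexit (n + 1) A' hA' z (by omega)).trans ?_)
      rw [pow_succ', ← mul_assoc]
      have := hψ.le_entrance z heq.symm
      gcongr

lemma real_covered_DD_le (hψ : IsCoverWeight d N j A θ β ψ) (hPl : IsCylRW d N Pl)
    (hN : 1 ≤ N) (hA : ∀ x ∈ A, |x.2 - j * N| < N) (hθ : 0 ≤ θ) (hβ : 1 ≤ β) (k : ℕ) :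
    ∀ A' ⊆ A, ∀ n, ∀ z : Cyl d N, N ≤ |z.2 - j * N| →
      (Pl z).real (coveredBefore (DD d N j k) n A') ≤ θ ^ A'.card * β ^ k := by
  induction k with
  | zero => exact fun A' hA' n z hz => by simpa using real_covered_DD_zero_le hPl hA hA' hθ n hz
  | succ k ih =>
    exact fun A' hA' n z hz => hψ.real_covered_DD_succ_le hPl hN hA hθ hβ
      (fun n => hψ.real_covered_DDAfterExit_le hPl hN hθ hβ ih n) n A' hA' z hz

lemma real_coveredBefore_DD_le (hψ : IsCoverWeight d N j A θ β ψ) (hPl : IsCylRW d N Pl)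
    (hN : 1 ≤ N) (hA : ∀ x ∈ A, |x.2 - j * N| < N) (hθ : 0 ≤ θ) (hβ : 1 ≤ β) {M : ℝ}
    (hM : 1 ≤ M) (hψM : ∀ z, ψ z ≤ M) (k n : ℕ) (z : Cyl d N) :
    (Pl z).real (coveredBefore (DD d N j k) n A) ≤ θ ^ A.card * M * β ^ k := by
  by_cases hzB : z ∈ Bblk d N j
  · obtain ⟨l, hlk, hl⟩ : ∃ l ≤ k, ∀ ω : ℕ → Cyl d N, ω 0 = z →
        DD d N j k ω ≤ DDAfterExit d N j l ω := by
      cases k with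
      | zero => exact ⟨0, le_rfl, fun _ _ => bot_le⟩
      | succ k => exact ⟨k, k.le_succ, fun ω h0 => (DD_succ_of_mem (h0 ▸ hzB)).le⟩
    refine (hPl.isChainLaw.measureReal_le_of_start
      (E' := coveredBefore (DDAfterExit d N j l) n A)
      fun ω hω h0 => coveredBefore_of_le (hl ω h0) hω).trans
        ((hψ.real_covered_DDAfterExit_le hPl hN hθ hβ
          (hψ.real_covered_DD_le hPl hN hA hθ hβ l) n A subset_rfl z ?_).trans ?_)
    · rw [mem_Bblk_iff] at hzB
      omega
    · have := hψM z
      gcongr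
  · refine (hψ.real_covered_DD_le hPl hN hA hθ hβ k A subset_rfl n z ?_).trans ?_
    · rw [mem_Bblk_iff] at hzB
      omega
    · exact mul_le_mul_of_nonneg_right (le_mul_of_one_le_right (by positivity) hM) (by positivity)

theorem real_subset_ranE_DD_le (hψ : IsCoverWeight d N j A θ β ψ) (hPl : IsCylRW d N Pl)
    (hN : 1 ≤ N) (hA : ∀ x ∈ A, |x.2 - j * N| < N) (hθ : 0 ≤ θ) (hβ : 1 ≤ β) {M : ℝ}
    (hM : 1 ≤ M) (hψM : ∀ z, ψ z ≤ M) (k : ℕ) (z : Cyl d N) :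
    (Pl z).real {ω | ↑A ⊆ ranE ω (DD d N j k ω)} ≤ θ ^ A.card * M * β ^ k := by
  have := hPl.1
  have hmono : Monotone fun n => coveredBefore (DD d N j k) n A := fun n n' hn ω hω x hx =>
    let ⟨i, hin, hi, hix⟩ := hω x hx
    ⟨i, hin.trans_le hn, hi, hix⟩
  have hunion : {ω | ↑A ⊆ ranE ω (DD d N j k ω)} ⊆ ⋃ n, coveredBefore (DD d N j k) n A := by
    intro ω hω
    choose! i hi hix using fun x (hx : x ∈ A) => hω hx
    exact Set.mem_iUnion.2 ⟨A.sup i + 1, fun x hx =>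
      ⟨i x, Nat.lt_succ_of_le (Finset.le_sup hx), hi x hx, hix x hx⟩⟩
  have hbound := fun n => hψ.real_coveredBefore_DD_le hPl hN hA hθ hβ hM hψM k n z
  have hnonneg := measureReal_nonneg.trans (hbound 0)
  refine (measureReal_mono hunion).trans ?_
  rw [measureReal_def, hmono.measure_iUnion]
  exact ENNReal.toReal_le_of_le_ofReal hnonneg (iSup_le fun n =>
    (ENNReal.le_ofReal_iff_toReal_le (measure_ne_top _ _) hnonneg).2 (hbound n))

end IsCoverWeight

end CoveringEstimate

/-! ### Superharmonic powers -/

section PowerFunction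

variable {p T : ℝ}

-- The odd terms of the two binomial series cancel, so the fourth order remainder is enough.
lemma one_add_rpow_add_one_sub_rpow_le (p : ℝ) : ∃ C > 0, ∃ δ > 0, ∀ t : ℝ, |t| ≤ δ →
    (1 + t) ^ (-p) + (1 - t) ^ (-p) ≤ 2 + p * (p + 1) * t ^ 2 + C * t ^ 4 := by
  have hseries := Real.one_add_rpow_hasFPowerSeriesAt_zero (a := -p)
  obtain ⟨C, hC, hbound⟩ := (hseries.isBigO_sub_partialSum_pow 4).exists_pos
  obtain ⟨δ, hδ, hball⟩ := Metric.eventually_nhds_iff.1 hbound.bound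
  have htaylor : ∀ t : ℝ, |t| ≤ δ / 2 → (1 + t) ^ (-p) ≤
      1 + -p * t + p * (p + 1) / 2 * t ^ 2 + Ring.choose (-p) 3 * t ^ 3 + C * t ^ 4 := by
    intro t ht
    have h := (le_abs_self _).trans
      (hball (y := t) (by rw [Real.dist_eq, sub_zero]; linarith))
    have hchoose : Ring.choose (-p) 2 = p * (p + 1) / 2 := by
      rw [Ring.choose_eq_smul]
      simp [descPochhammer_succ_right, Polynomial.smeval_mul, Polynomial.smeval_sub, Nat.factorial]
      ring
    simp only [FormalMultilinearSeries.partialSum, binomialSeries,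
      FormalMultilinearSeries.ofScalars_apply_eq, Finset.sum_range_succ, Finset.sum_range_zero,
      Ring.choose_zero_right, Ring.choose_one_right, hchoose, smul_eq_mul, Real.norm_eq_abs,
      zero_add, pow_zero, pow_one, one_mul, Even.pow_abs (by decide : Even 4),
      abs_of_nonneg (by positivity : 0 ≤ t ^ 4)] at h
    linarith
  refine ⟨2 * C, by positivity, δ / 2, by positivity, fun t ht => ?_⟩
  have hpos := htaylor t ht
  have hneg := htaylor (-t) (by rwa [abs_neg])
  rw [← sub_eq_add_neg] at hneg
  linear_combination hpos + hneg

lemma add_rpow_add_sub_rpow_le (p : ℝ) : ∃ C > 0, ∃ a > 0, ∀ A b : ℝ, a ≤ A → b ^ 2 ≤ A →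
    (A + 2 * b) ^ (-p) + (A - 2 * b) ^ (-p) ≤
      A ^ (-p) * (2 + (4 * p * (p + 1) / A ^ 2 + C / A ^ 3) * b ^ 2) := by
  obtain ⟨C, hC, δ, hδ, hbinom⟩ := one_add_rpow_add_one_sub_rpow_le p
  refine ⟨16 * C, by positivity, max 4 (4 / δ ^ 2) + 1, by positivity, fun A b hA hb => ?_⟩
  have hA4 : 4 < A := by linarith [le_max_left 4 (4 / δ ^ 2)]
  have hAδ : 4 / δ ^ 2 ≤ A := by linarith [le_max_right 4 (4 / δ ^ 2)]
  have hA0 : 0 < A := by linarith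
  set t := 2 * b / A with ht
  have htA : t * A = 2 * b := by rw [ht]; field_simp
  have htsq : t ^ 2 ≤ 4 / A := by
    rw [ht, div_pow, div_le_div_iff₀ (by positivity) hA0]
    nlinarith
  have htδ : |t| ≤ δ :=
    abs_le_of_sq_le_sq (htsq.trans ((div_le_comm₀ hA0 (by positivity)).2 hAδ)) hδ.le
  have ht1 : |t| ≤ 1 := abs_le_of_sq_le_sq
    (htsq.trans (by rw [one_pow, div_le_one hA0]; exact hA4.le)) one_pos.le
  obtain ⟨hlo, hhi⟩ := abs_le.1 ht1
  calc (A + 2 * b) ^ (-p) + (A - 2 * b) ^ (-p)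
      = A ^ (-p) * ((1 + t) ^ (-p) + (1 - t) ^ (-p)) := by
        rw [mul_add, ← Real.mul_rpow hA0.le (by linarith), ← Real.mul_rpow hA0.le (by linarith),
          mul_add, mul_sub, mul_comm A t, htA, mul_one]
    _ ≤ A ^ (-p) * (2 + p * (p + 1) * t ^ 2 + C * t ^ 4) :=
        mul_le_mul_of_nonneg_left (hbinom t htδ) (by positivity)
    _ ≤ A ^ (-p) * (2 + p * (p + 1) * t ^ 2 + C * ((4 / A) * t ^ 2)) := by
        rw [show t ^ 4 = t ^ 2 * t ^ 2 by ring]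
        gcongr
    _ = A ^ (-p) * (2 + (4 * p * (p + 1) / A ^ 2 + 16 * C / A ^ 3) * b ^ 2) := by
        rw [ht]
        field_simp
        ring

lemma rpow_neg_tangent_le (hp : 0 ≤ p) {s : ℝ} (hs : 0 < s) (hT : 0 < T) :
    T ^ (-p) - p * T ^ (-p - 1) * (s - T) ≤ s ^ (-p) := by
  have hu : 0 < s / T := by positivity
  have htangent : 1 - p * (s / T - 1) ≤ (s / T) ^ (-p) := by
    rw [Real.rpow_def_of_pos hu]
    nlinarith [Real.add_one_le_exp (Real.log (s / T) * -p), Real.log_le_sub_one_of_pos hu]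
  calc T ^ (-p) - p * T ^ (-p - 1) * (s - T) = T ^ (-p) * (1 - p * (s / T - 1)) := by
        rw [Real.rpow_sub_one hT.ne']
        field_simp
    _ ≤ T ^ (-p) * (s / T) ^ (-p) := by gcongr
    _ = s ^ (-p) := by rw [← Real.mul_rpow hT.le hu.le, mul_div_cancel₀ _ hT.ne']

lemma mul_div_add_one_le {C κ a s : ℝ} (hκ : 0 ≤ κ) (hC : 0 ≤ C) (ha : 0 ≤ a)
    (hCa : C ≤ κ * a) (hs : 0 < s) :
    (κ / (s + 1) ^ 2 + C / (s + 1) ^ 3) * (s - a) ≤ κ / (s + 1) := by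
  have hle : C * ((s - a) / (s + 1)) ≤ κ * a :=
    (mul_le_of_le_one_right hC ((div_le_one (by linarith)).2 (by linarith))).trans hCa
  calc (κ / (s + 1) ^ 2 + C / (s + 1) ^ 3) * (s - a)
      = (κ * (s - a) + C * ((s - a) / (s + 1))) / (s + 1) ^ 2 := by field_simp
    _ ≤ (κ * (s - a) + κ * a) / (s + 1) ^ 2 := by gcongr
    _ ≤ κ * (s + 1) / (s + 1) ^ 2 := by gcongr; linarith
    _ = κ / (s + 1) := by field_simp

/-- The shift `a` makes `y ↦ (a + |y|²)^{-p}` superharmonic on `ℤ^J`: the sum on the left runs over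
the squared norms of the neighbours of `y`. -/
structure IsSuperharmonicShift {ι : Type*} (J : Finset ι) (p a : ℝ) : Prop where
  one_le : 1 ≤ a
  sum_rpow_le : ∀ (y : ι → ℝ) (s : ℝ), s = a + ∑ i ∈ J, y i ^ 2 →
    ∑ i ∈ J, ((s + 1 + 2 * y i) ^ (-p) + (s + 1 - 2 * y i) ^ (-p)) ≤ 2 * J.card * s ^ (-p)

lemma exists_isSuperharmonicShift (ι : Type*) (hp : 0 < p) :
    ∃ a > 0, ∀ J : Finset ι, (J.card : ℝ) = 2 * p + 2 → IsSuperharmonicShift J p a := by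
  obtain ⟨C, hC, a₀, ha₀, hterm⟩ := add_rpow_add_sub_rpow_le p
  set a : ℝ := 1 + a₀ + C / (4 * p * (p + 1)) with ha
  have hCa : 0 ≤ C / (4 * p * (p + 1)) := by positivity
  have haC : C ≤ 4 * p * (p + 1) * a := by
    rw [← div_le_iff₀' (by positivity)]
    linarith [ha]
  refine ⟨a, by linarith, fun J hJ => ⟨by linarith, fun y s hs => ?_⟩⟩
  have hsum : ∑ i ∈ J, y i ^ 2 = s - a := by linarith
  have hy : ∀ i ∈ J, y i ^ 2 ≤ s - a := fun i hi =>
    (Finset.single_le_sum (fun i _ => sq_nonneg (y i)) hi).trans hsum.le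
  have hsa : 0 ≤ s - a := hsum ▸ Finset.sum_nonneg fun i _ => sq_nonneg (y i)
  have hs0 : 0 < s := by linarith
  have htangent : (s + 1) ^ (-p) * (1 + p / (s + 1)) ≤ s ^ (-p) := by
    refine le_of_eq_of_le ?_ (rpow_neg_tangent_le hp.le hs0 (add_pos hs0 one_pos))
    rw [Real.rpow_sub_one (by positivity)]
    field_simp
    ring
  calc ∑ i ∈ J, ((s + 1 + 2 * y i) ^ (-p) + (s + 1 - 2 * y i) ^ (-p))
      ≤ ∑ i ∈ J, (s + 1) ^ (-p) *
          (2 + (4 * p * (p + 1) / (s + 1) ^ 2 + C / (s + 1) ^ 3) * y i ^ 2) :=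
        Finset.sum_le_sum fun i hi => hterm _ _ (by linarith) (by linarith [hy i hi])
    _ = (s + 1) ^ (-p) *
          (2 * J.card + (4 * p * (p + 1) / (s + 1) ^ 2 + C / (s + 1) ^ 3) * (s - a)) := by
        rw [← Finset.mul_sum, Finset.sum_add_distrib, ← Finset.mul_sum, hsum, Finset.sum_const,
          nsmul_eq_mul, mul_comm 2]
    _ ≤ (s + 1) ^ (-p) * (2 * J.card * (1 + p / (s + 1))) := by
        have hexcess := mul_div_add_one_le (κ := 4 * p * (p + 1)) (by positivity) hC.le
          (by linarith) haC hs0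
        refine mul_le_mul_of_nonneg_left ?_ (by positivity)
        rw [hJ]
        linear_combination hexcess
    _ ≤ 2 * J.card * s ^ (-p) := by
        rw [mul_left_comm]
        exact mul_le_mul_of_nonneg_left htangent
          (mul_nonneg zero_le_two J.card.cast_nonneg)

end PowerFunction

/-! ### Barriers on the cylinder -/

section Coordinates

variable {d N : ℕ} {J : Finset (Fin (d + 1))} {i i' : Fin (d + 1)}

/-- The lift to `ℤ^{d+1}` of a point of the cylinder whose horizontal coordinates are those of
least absolute value. -/
noncomputable def coord (w : Cyl d N) : Lat d :=
  Fin.snoc (α := fun _ => ℤ) (fun i => (w.1 i).valMinAbs) w.2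

lemma coord_castSucc (w : Cyl d N) (i : Fin d) : coord w i.castSucc = (w.1 i).valMinAbs := by
  simp [coord]

lemma coord_last (w : Cyl d N) : coord w (Fin.last d) = w.2 := by
  simp [coord]

lemma coord_add_zsmul_cylStep_of_ne (w : Cyl d N) (h : i' ≠ i) (ε : ℤ) :
    coord (w + ε • cylStep d N i) i' = coord w i' := by
  induction i' using Fin.lastCases with
  | last => simp [coord_last, cylStep, projE, latStep, h]
  | cast l => simp [coord_castSucc, cylStep, projE, latStep, h]

lemma coord_add_zsmul_cylStep (hN : 4 < N) {w : Cyl d N} (h : 4 * |coord w i| ≤ N) {ε : ℤ}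
    (hε : |ε| ≤ 1) : coord (w + ε • cylStep d N i) i = coord w i + ε := by
  induction i using Fin.lastCases with
  | last => simp [coord_last, cylStep, projE, latStep]
  | cast l =>
    have : NeZero N := ⟨by omega⟩
    rw [coord_castSucc] at h
    obtain ⟨hlo, hhi⟩ := abs_le.1 (show |(w.1 l).valMinAbs| ≤ N / 4 by omega)
    rw [abs_le] at hε
    rw [coord_castSucc, coord_castSucc, ZMod.valMinAbs_spec]
    refine ⟨by simp [cylStep, projE, latStep], ?_, ?_⟩ <;> omega

/-- The squared Euclidean norm of the `J`-coordinates. -/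
noncomputable def normSqOn (J : Finset (Fin (d + 1))) (w : Cyl d N) : ℝ :=
  ∑ i ∈ J, (coord w i : ℝ) ^ 2

lemma normSqOn_nonneg (w : Cyl d N) : 0 ≤ normSqOn J w :=
  Finset.sum_nonneg fun _ _ => sq_nonneg _

lemma sq_coord_le_normSqOn (w : Cyl d N) (hi : i ∈ J) : (coord w i : ℝ) ^ 2 ≤ normSqOn J w :=
  Finset.single_le_sum (fun i _ => sq_nonneg (coord w i : ℝ)) hi

lemma four_mul_abs_coord_le {w : Cyl d N} (hi : i ∈ J) (h : normSqOn J w ≤ (N : ℝ) ^ 2 / 16) :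
    4 * |coord w i| ≤ N := by
  have hsq : (4 * (coord w i : ℝ)) ^ 2 ≤ (N : ℝ) ^ 2 := by
    linarith [sq_coord_le_normSqOn w hi]
  have habs := abs_le_of_sq_le_sq hsq N.cast_nonneg
  rw [abs_mul, abs_of_nonneg (by norm_num : (0 : ℝ) ≤ 4)] at habs
  exact_mod_cast habs

lemma normSqOn_add_zsmul_cylStep_of_notMem (w : Cyl d N) (hi : i ∉ J) (ε : ℤ) :
    normSqOn J (w + ε • cylStep d N i) = normSqOn J w :=
  Finset.sum_congr rfl fun _ hi' => by
    rw [coord_add_zsmul_cylStep_of_ne w (ne_of_mem_of_not_mem hi' hi)]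

lemma normSqOn_add_zsmul_cylStep (hN : 4 < N) {w : Cyl d N} (hi : i ∈ J)
    (h : normSqOn J w ≤ (N : ℝ) ^ 2 / 16) {ε : ℤ} (hε : |ε| ≤ 1) :
    normSqOn J (w + ε • cylStep d N i) = normSqOn J w + ε ^ 2 + 2 * ε * coord w i := by
  have herase : ∑ i' ∈ J.erase i, (coord (w + ε • cylStep d N i) i' : ℝ) ^ 2 =
      ∑ i' ∈ J.erase i, (coord w i' : ℝ) ^ 2 :=
    Finset.sum_congr rfl fun i' hi' => by
      rw [coord_add_zsmul_cylStep_of_ne w (Finset.ne_of_mem_erase hi')]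
  rw [normSqOn, normSqOn, ← Finset.add_sum_erase _ _ hi, herase, ← Finset.add_sum_erase J _ hi,
    coord_add_zsmul_cylStep hN (four_mul_abs_coord_le hi h) hε]
  push_cast
  ring

lemma add_normSqOn_add_zsmul_cylStep_le (hN : 4 < N) {a : ℝ} (ha : 1 ≤ a) (w : Cyl d N)
    (h : normSqOn J w ≤ (N : ℝ) ^ 2 / 16) {ε : ℤ} (hε : |ε| ≤ 1) :
    a + normSqOn J (w + ε • cylStep d N i) ≤ 3 * (a + normSqOn J w) := by
  by_cases hi : i ∈ J
  · have hε1 : (ε : ℝ) ^ 2 ≤ 1 := by exact_mod_cast (sq_le_one_iff_abs_le_one ε).2 hε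
    rw [normSqOn_add_zsmul_cylStep hN hi h hε]
    nlinarith [sq_coord_le_normSqOn w hi, sq_nonneg (ε - coord w i : ℝ)]
  · rw [normSqOn_add_zsmul_cylStep_of_notMem w hi]
    linarith [normSqOn_nonneg (J := J) w]

end Coordinates

section Barrier

variable {d N : ℕ} {J : Finset (Fin (d + 1))} {a p T : ℝ}

/-- The profile `s ↦ s^{-p}` with a linear term making it increasing beyond `T`. -/
noncomputable def tiltedPow (p T s : ℝ) : ℝ := s ^ (-p) + p * T ^ (-p - 1) * s

lemma tiltedPow_monotoneOn (hp : 0 ≤ p) (hT : 0 < T) :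
    MonotoneOn (tiltedPow p T) (Set.Ici T) := by
  intro s hs t ht hst
  rw [Set.mem_Ici] at hs ht
  have hs0 : 0 < s := hT.trans_le hs
  have hslope : p * s ^ (-p - 1) * (t - s) ≤ p * T ^ (-p - 1) * (t - s) :=
    mul_le_mul_of_nonneg_right (mul_le_mul_of_nonneg_left
      (Real.rpow_le_rpow_of_nonpos hT hs (by linarith)) hp) (by linarith)
  unfold tiltedPow
  linarith [rpow_neg_tangent_le hp (hs0.trans_le hst) hs0]

/-- The function on the cylinder that behaves like `|·|^{-2p}` in the `J`-coordinates near the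
origin and is constant at distances beyond `N / 4`, when `64 T = N²`. -/
noncomputable def cappedPow (J : Finset (Fin (d + 1))) (a p T : ℝ) (w : Cyl d N) : ℝ :=
  tiltedPow p T (min (a + normSqOn J w) (4 * T))

lemma cappedPow_le_tiltedPow (hp : 0 ≤ p) (hT : 0 < T) (w : Cyl d N) :
    cappedPow J a p T w ≤ tiltedPow p T (a + normSqOn J w) := by
  rcases le_total (a + normSqOn J w) (4 * T) with h | h
  · rw [cappedPow, min_eq_left h]
  · rw [cappedPow, min_eq_right h]
    exact tiltedPow_monotoneOn hp hT (Set.mem_Ici.2 (by linarith)) (Set.mem_Ici.2 (by linarith)) h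

lemma nbrAvg_cappedPow_le_of_le (hN : 4 < N) (hNT : (N : ℝ) ^ 2 = 64 * T) (hp : 0 ≤ p)
    (hT : 0 < T) (ha : IsSuperharmonicShift J p a)
    {w : Cyl d N} (hw : a + normSqOn J w ≤ 4 * T) :
    nbrAvg (cylStep d N) (cappedPow J a p T) w ≤ cappedPow J a p T w + p * T ^ (-p - 1) := by
  have hnorm : normSqOn J w ≤ (N : ℝ) ^ 2 / 16 := by linarith [ha.one_le]
  set κ := p * T ^ (-p - 1) with hκ
  set s := a + normSqOn J w with hs
  set f : Cyl d N → ℝ := fun v => tiltedPow p T (a + normSqOn J v) with hf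
  have hin : ∀ i ∈ J, f (w + cylStep d N i) + f (w - cylStep d N i) =
      (s + 1 + 2 * coord w i) ^ (-p) + (s + 1 - 2 * coord w i) ^ (-p) + 2 * κ * (s + 1) := by
    intro i hi
    have hadd := normSqOn_add_zsmul_cylStep hN hi hnorm (ε := 1) (by simp)
    have hsub := normSqOn_add_zsmul_cylStep hN hi hnorm (ε := -1) (by simp)
    simp only [one_zsmul, neg_zsmul, ← sub_eq_add_neg] at hadd hsub
    simp only [hf, hadd, hsub, tiltedPow, ← hκ]
    push_cast
    rw [hs]
    ring_nf
  have hout : ∀ i ∈ Jᶜ, f (w + cylStep d N i) + f (w - cylStep d N i) =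
      2 * (s ^ (-p) + κ * s) := by
    intro i hi
    have hadd := normSqOn_add_zsmul_cylStep_of_notMem w (Finset.mem_compl.1 hi) 1
    have hsub := normSqOn_add_zsmul_cylStep_of_notMem w (Finset.mem_compl.1 hi) (-1)
    simp only [one_zsmul, neg_zsmul, ← sub_eq_add_neg] at hadd hsub
    simp only [hf, hadd, hsub, tiltedPow, ← hκ, ← hs, two_mul]
  refine (nbrAvg_mono (g := f) (fun _ => cappedPow_le_tiltedPow hp hT _)
    fun _ => cappedPow_le_tiltedPow hp hT _).trans ?_
  rw [cappedPow, min_eq_left hw, nbrAvg, div_le_iff₀ (by rw [Fintype.card_fin]; positivity),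
    ← Finset.sum_add_sum_compl J, Finset.sum_congr rfl hin, Finset.sum_congr rfl hout,
    Finset.sum_add_distrib, Finset.sum_const, Finset.sum_const, Fintype.card_fin]
  have hcard : (J.card : ℝ) + Jᶜ.card = (d + 1 : ℕ) := by
    exact_mod_cast J.card_add_card_compl.trans (Fintype.card_fin _)
  have hJ := ha.sum_rpow_le (fun i => coord w i) s rfl
  rw [← hcard, tiltedPow, ← hκ]
  simp only [nsmul_eq_mul]
  have : 0 ≤ κ * Jᶜ.card := by positivity
  linear_combination hJ + 2 * this

lemma nbrAvg_cappedPow_le (hN : 4 < N) (hNT : (N : ℝ) ^ 2 = 64 * T) (hp : 0 ≤ p) (hT : 0 < T)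
    (ha : IsSuperharmonicShift J p a) (w : Cyl d N) :
    nbrAvg (cylStep d N) (cappedPow J a p T) w ≤ cappedPow J a p T w + p * T ^ (-p - 1) := by
  rcases le_or_gt (a + normSqOn J w) (4 * T) with hw | hw
  · exact nbrAvg_cappedPow_le_of_le hN hNT hp hT ha hw
  have hfar : ∀ i (ε : ℤ), |ε| ≤ 1 →
      cappedPow J a p T (w + ε • cylStep d N i) ≤ cappedPow J a p T w := by
    intro i ε hε
    rw [cappedPow, cappedPow, min_eq_right hw.le]
    refine tiltedPow_monotoneOn hp hT (Set.mem_Ici.2 (le_min ?_ (by linarith)))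
      (Set.mem_Ici.2 (by linarith)) (min_le_right _ _)
    by_contra! hlt
    have hback := add_normSqOn_add_zsmul_cylStep_le (J := J) (i := i) hN ha.one_le
      (w + ε • cylStep d N i) (by linarith [ha.one_le]) (ε := -ε) (by rwa [abs_neg])
    rw [neg_zsmul, add_neg_cancel_right] at hback
    linarith
  refine (nbrAvg_mono (g := fun _ => cappedPow J a p T w)
    (fun i => by simpa using hfar i 1 (by simp))
    fun i => by simpa [← sub_eq_add_neg] using hfar i (-1) (by simp)).trans ?_
  rw [nbrAvg_const]
  exact le_add_of_nonneg_right (by positivity)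

lemma cappedPow_nonneg (hp : 0 ≤ p) (hT : 0 < T) (ha : 0 ≤ a) (w : Cyl d N) :
    0 ≤ cappedPow J a p T w := by
  have hmin : 0 ≤ min (a + normSqOn J w) (4 * T) :=
    le_min (add_nonneg ha (normSqOn_nonneg w)) (by positivity)
  exact add_nonneg (Real.rpow_nonneg hmin _) (mul_nonneg (by positivity) hmin)

lemma rpow_neg_le_cappedPow (hp : 0 ≤ p) (hT : 0 < T) (ha : 0 < a) {w : Cyl d N}
    (hw : normSqOn J w = 0) : a ^ (-p) ≤ cappedPow J a p T w := by
  have hmin : 0 < min a (4 * T) := lt_min ha (by positivity)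
  rw [cappedPow, hw, add_zero]
  exact le_add_of_le_of_nonneg
    (Real.rpow_le_rpow_of_nonpos hmin (min_le_left _ _) (neg_nonpos.2 hp)) (by positivity)

lemma cappedPow_le (hp : 0 ≤ p) (hT : 0 < T) (ha : 0 ≤ a) {w : Cyl d N} {r : ℝ} (hr : 0 < r)
    (hrw : r ≤ normSqOn J w) :
    cappedPow J a p T w ≤ r ^ (-p) + (1 + 4 * p) * T ^ (-p) := by
  have hcap : min (a + normSqOn J w) (4 * T) ^ (-p) ≤ r ^ (-p) + T ^ (-p) := by
    rcases min_choice (a + normSqOn J w) (4 * T) with h | h <;> rw [h]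
    · exact le_add_of_le_of_nonneg
        (Real.rpow_le_rpow_of_nonpos hr (by linarith) (neg_nonpos.2 hp)) (by positivity)
    · exact le_add_of_nonneg_of_le (by positivity)
        (Real.rpow_le_rpow_of_nonpos hT (by linarith) (neg_nonpos.2 hp))
  have htilt : p * T ^ (-p - 1) * min (a + normSqOn J w) (4 * T) ≤ 4 * p * T ^ (-p) := by
    calc p * T ^ (-p - 1) * min (a + normSqOn J w) (4 * T) ≤ p * T ^ (-p - 1) * (4 * T) := by
          gcongr
          exact min_le_right _ _
      _ = 4 * p * T ^ (-p) := by
          rw [Real.rpow_sub_one hT.ne']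
          field_simp
  rw [cappedPow, tiltedPow]
  linarith

lemma nbrAvg_sq_height (m : ℤ) (z : Cyl d N) :
    nbrAvg (cylStep d N) (fun y => ((y.2 - m : ℤ) : ℝ) ^ 2) z =
      ((z.2 - m : ℤ) : ℝ) ^ 2 + 1 / (d + 1) := by
  have hhor : ∀ i : Fin d, (cylStep d N i.castSucc).2 = 0 := fun i => by
    simp [cylStep, projE, latStep, (Fin.castSucc_lt_last i).ne]
  have hver : (cylStep d N (Fin.last d)).2 = 1 := by simp [cylStep, projE, latStep]
  rw [nbrAvg, Fin.sum_univ_castSucc]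
  simp only [Prod.snd_add, Prod.snd_sub, hhor, hver, add_zero, sub_zero, Finset.sum_const,
    Finset.card_univ, Fintype.card_fin, nsmul_eq_mul]
  push_cast
  field_simp
  ring

/-- A superharmonic function comparable, up to `C`, with the hitting probability of the fibre
`{z | z - x vanishes in the J-coordinates}` before leaving `B̃_j`, which decays like the Green
function `|·|^{-2p}` of `ℤ^{2p+2}`. -/
structure IsBarrier (j : ℤ) (J : Finset (Fin (d + 1))) (x : Cyl d N) (p C : ℝ)
    (h : Cyl d N → ℝ) : Prop where
  superharmonic : ∀ z, nbrAvg (cylStep d N) h z ≤ h z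
  nonneg : ∀ z, |z.2 - j * N| ≤ 2 * N → 0 ≤ h z
  one_le : ∀ z, |z.2 - j * N| ≤ 2 * N → normSqOn J (z - x) = 0 → 1 ≤ h z
  le : ∀ z r, 0 < r → r ≤ normSqOn J (z - x) → h z ≤ C * (r ^ (-p) + (N : ℝ) ^ (-(2 * p)))

/-- The capped power centred at `x`, corrected by a parabola in the height that is nonnegative on
`B̃_j` and compensates for the cap. -/
noncomputable def barrierFn (j : ℤ) (J : Finset (Fin (d + 1))) (a p T : ℝ) (x z : Cyl d N) : ℝ :=
  a ^ p * (cappedPow J a p T (z - x) +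
    (d + 1) * (p * T ^ (-p - 1)) * (4 * N ^ 2 + -1 * ((z.2 - j * N : ℤ) : ℝ) ^ 2))

lemma nbrAvg_barrierFn_le (hN : 4 < N) (hNT : (N : ℝ) ^ 2 = 64 * T) (hp : 0 ≤ p) (hT : 0 < T)
    (ha : IsSuperharmonicShift J p a) (j : ℤ) (x z : Cyl d N) :
    nbrAvg (cylStep d N) (barrierFn j J a p T x) z ≤ barrierFn j J a p T x z := by
  have ha0 := ha.one_le
  have hcap := nbrAvg_cappedPow_le hN hNT hp hT ha (z - x)
  unfold barrierFn
  rw [nbrAvg_const_mul, nbrAvg_add, nbrAvg_const_mul, nbrAvg_add, nbrAvg_const, nbrAvg_const_mul,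
    nbrAvg_sq_height, nbrAvg_comp_sub]
  refine mul_le_mul_of_nonneg_left ?_ (by positivity)
  have hcorrection : ((d : ℝ) + 1) * (p * T ^ (-p - 1)) * (1 / (d + 1)) = p * T ^ (-p - 1) := by
    field_simp
  linear_combination hcap - hcorrection

lemma barrierFn_le (hN : 0 < N) (hNT : (N : ℝ) ^ 2 = 64 * T) (hp : 0 ≤ p) (hT : 0 < T)
    (ha : 0 ≤ a) (j : ℤ) {x z : Cyl d N} {r : ℝ} (hr : 0 < r) (hrz : r ≤ normSqOn J (z - x)) :
    barrierFn j J a p T x z ≤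
      a ^ p * (1 + (1 + 4 * p + 256 * (d + 1) * p) * 64 ^ p) *
        (r ^ (-p) + (N : ℝ) ^ (-(2 * p))) := by
  have hTN : T ^ (-p) = (64 : ℝ) ^ p * (N : ℝ) ^ (-(2 * p)) := by
    rw [show -(2 * p) = 2 * -p by ring, Real.rpow_mul N.cast_nonneg, Real.rpow_ofNat, hNT,
      Real.mul_rpow (by norm_num) hT.le, ← mul_assoc, ← Real.rpow_add (by norm_num),
      add_neg_cancel, Real.rpow_zero, one_mul]
  have hparabola : ((d : ℝ) + 1) * (p * T ^ (-p - 1)) *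
      (4 * N ^ 2 + -1 * ((z.2 - j * N : ℤ) : ℝ) ^ 2) ≤
      256 * (d + 1) * p * T ^ (-p) := by
    calc _ ≤ ((d : ℝ) + 1) * (p * T ^ (-p - 1)) * (4 * N ^ 2) := by
          gcongr
          linarith [sq_nonneg ((z.2 - j * N : ℤ) : ℝ)]
      _ = 256 * (d + 1) * p * T ^ (-p) := by
          rw [Real.rpow_sub_one hT.ne', hNT]
          field_simp
          ring
  rw [barrierFn, mul_assoc (a ^ p)]
  refine mul_le_mul_of_nonneg_left ?_ (Real.rpow_nonneg ha p)
  have hcap := cappedPow_le hp hT ha hr hrz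
  rw [hTN] at hcap hparabola
  have : 0 ≤ (1 + 4 * p + 256 * (d + 1) * p) * 64 ^ p * r ^ (-p) := by positivity
  have : 0 ≤ (N : ℝ) ^ (-(2 * p)) := by positivity
  linarith

theorem exists_isBarrier (d : ℕ) (hp : 0 < p) : ∃ C > 0, ∀ N > 4, ∀ J : Finset (Fin (d + 1)),
    (J.card : ℝ) = 2 * p + 2 → ∀ (j : ℤ) (x : Cyl d N), ∃ h, IsBarrier j J x p C h := by
  obtain ⟨a, ha, hJ⟩ := exists_isSuperharmonicShift (Fin (d + 1)) hp
  refine ⟨a ^ p * (1 + (1 + 4 * p + 256 * (d + 1) * p) * 64 ^ p), by positivity,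
    fun N hN J hcard j x => ⟨barrierFn j J a p ((N : ℝ) ^ 2 / 64) x, ?_⟩⟩
  have hT : (0 : ℝ) < (N : ℝ) ^ 2 / 64 := by positivity
  have hNT : (N : ℝ) ^ 2 = 64 * ((N : ℝ) ^ 2 / 64) := by ring
  have hparabola : ∀ z : Cyl d N, |z.2 - j * N| ≤ 2 * N → 0 ≤ ((d : ℝ) + 1) *
      (p * ((N : ℝ) ^ 2 / 64) ^ (-p - 1)) * (4 * N ^ 2 + -1 * ((z.2 - j * N : ℤ) : ℝ) ^ 2) := by
    intro z hz
    have hz' : |((z.2 - j * N : ℤ) : ℝ)| ≤ 2 * N := by exact_mod_cast hz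
    have hsq := sq_le_sq' (abs_le.1 hz').1 (abs_le.1 hz').2
    exact mul_nonneg (by positivity) (by linarith)
  exact {
    superharmonic := nbrAvg_barrierFn_le hN hNT hp.le hT (hJ J hcard) j x
    nonneg := fun z hz => mul_nonneg (by positivity)
      (add_nonneg (cappedPow_nonneg hp.le hT ha.le _) (hparabola z hz))
    one_le := fun z hz hzx => by
      calc 1 = a ^ p * a ^ (-p) := by rw [← Real.rpow_add ha, add_neg_cancel, Real.rpow_zero]
        _ ≤ _ := mul_le_mul_of_nonneg_left (le_add_of_le_of_nonneg
          (rpow_neg_le_cappedPow hp.le hT ha hzx) (hparabola z hz)) (by positivity)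
    le := fun z r hr hrz => barrierFn_le (by omega) hNT hp.le hT ha.le j hr hrz }

end Barrier

/-! ### Hitting a fibre -/

section FibreFunction

variable {d N ν : ℕ} {e : Fin ν ↪ Fin (d + 1)} {p C M ε : ℝ} {j : ℤ} {x : Cyl d N}

/-- The coordinates selected by `e`, as a point of `ℤ^ν`. -/
noncomputable def transverse (e : Fin ν ↪ Fin (d + 1)) (w : Cyl d N) : ZLat ν :=
  fun i => coord w (e i)

lemma transverse_add_zsmul_cylStep (hN : 4 < N) {w : Cyl d N}
    (h : normSqOn (Finset.univ.map e) w ≤ (N : ℝ) ^ 2 / 16) {η : ℤ} (hη : |η| ≤ 1) (i : Fin ν) :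
    transverse e (w + η • cylStep d N (e i)) = transverse e w + η • latStep ν i := by
  ext l
  by_cases hl : l = i
  · subst hl
    have hcoord := four_mul_abs_coord_le (Finset.mem_map_of_mem e (Finset.mem_univ l)) h
    rw [transverse, coord_add_zsmul_cylStep hN hcoord hη]
    simp [transverse, latStep]
  · rw [transverse, coord_add_zsmul_cylStep_of_ne w (e.injective.ne hl)]
    simp [transverse, latStep, hl]

lemma transverse_add_zsmul_cylStep_of_notMem (w : Cyl d N) {i : Fin (d + 1)}
    (hi : i ∉ Finset.univ.map e) (η : ℤ) :
    transverse e (w + η • cylStep d N i) = transverse e w := by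
  ext l
  exact coord_add_zsmul_cylStep_of_ne w
    (ne_of_mem_of_not_mem (Finset.mem_map_of_mem e (Finset.mem_univ l)) hi) η

lemma transverse_eq_zero {w : Cyl d N} (h : normSqOn (Finset.univ.map e) w = 0) :
    transverse e w = 0 := by
  ext i
  have hsq := sq_coord_le_normSqOn w (Finset.mem_map_of_mem e (Finset.mem_univ i))
  rw [h] at hsq
  exact_mod_cast pow_eq_zero_iff two_ne_zero |>.1 (hsq.antisymm (sq_nonneg _))

lemma nbrAvg_le_of_le_transverse [NeZero ν] (hN : 4 < N) {f : Cyl d N → ℝ} {g : ZLat ν → ℝ}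
    {b : ℝ} (hf : ∀ y, f y ≤ g (transverse e (y - x))) {z : Cyl d N}
    (hz : normSqOn (Finset.univ.map e) (z - x) ≤ (N : ℝ) ^ 2 / 16)
    (hb : ∀ i ∉ Finset.univ.map e, ∀ η : ℤ, f (z + η • cylStep d N i) ≤ b) :
    nbrAvg (cylStep d N) f z ≤
      (1 - ν / (d + 1)) * b + ν / (d + 1) * nbrAvg (latStep ν) g (transverse e (z - x)) := by
  have hν : (ν : ℝ) ≠ 0 := NeZero.ne _
  have hin : ∑ i ∈ Finset.univ.map e, (f (z + cylStep d N i) + f (z - cylStep d N i)) ≤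
      2 * ν * nbrAvg (latStep ν) g (transverse e (z - x)) := by
    rw [Finset.sum_map, nbrAvg, Fintype.card_fin, mul_div_cancel₀ _ (by positivity)]
    refine Finset.sum_le_sum fun i _ => ?_
    have hstep : ∀ η : ℤ, |η| ≤ 1 → f (z + η • cylStep d N (e i)) ≤
        g (transverse e (z - x) + η • latStep ν i) := fun η hη => by
      rw [← transverse_add_zsmul_cylStep hN hz hη, ← add_sub_right_comm]
      exact hf _
    have hadd := hstep 1 (by simp)
    have hsub := hstep (-1) (by simp)
    simp only [one_zsmul, neg_zsmul, ← sub_eq_add_neg] at hadd hsub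
    exact add_le_add hadd hsub
  have hout : ∑ i ∈ (Finset.univ.map e)ᶜ, (f (z + cylStep d N i) + f (z - cylStep d N i)) ≤
      (d + 1 - ν) * (2 * b) := by
    have hcard : ((Finset.univ.map e)ᶜ.card : ℝ) = d + 1 - ν := by
      have := (Finset.univ.map e).card_add_card_compl
      rw [Finset.card_map, Finset.card_fin, Fintype.card_fin] at this
      rw [eq_sub_iff_add_eq']
      exact_mod_cast this
    rw [← hcard, ← nsmul_eq_mul]
    refine Finset.sum_le_card_nsmul _ _ _ fun i hi => ?_
    have hadd := hb i (Finset.mem_compl.1 hi) 1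
    have hsub := hb i (Finset.mem_compl.1 hi) (-1)
    rw [one_zsmul] at hadd
    rw [neg_one_zsmul, ← sub_eq_add_neg] at hsub
    linarith
  rw [nbrAvg, div_le_iff₀ (by rw [Fintype.card_fin]; positivity),
    ← Finset.sum_add_sum_compl (Finset.univ.map e)]
  refine (add_le_add hin hout).trans_eq ?_
  rw [Fintype.card_fin]
  push_cast
  field_simp
  ring

/-- A superharmonic function playing the role of the probability, starting from `z`, of hitting the
fibre `{z | z - x vanishes in the J-coordinates}` before leaving `B̃_j`; `χ` bounds its
one-step average from the fibre. -/
structure IsFibreFn (j : ℤ) (J : Finset (Fin (d + 1))) (x : Cyl d N) (χ : ℝ)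
    (w : Cyl d N → ℝ) : Prop where
  superharmonic : ∀ z, nbrAvg (cylStep d N) w z ≤ w z
  nonneg : ∀ z, |z.2 - j * N| ≤ 2 * N → 0 ≤ w z
  le_one : ∀ z, w z ≤ 1
  one_le : ∀ z, |z.2 - j * N| ≤ 2 * N → normSqOn J (z - x) = 0 → 1 ≤ w z
  nbrAvg_le : ∀ z, normSqOn J (z - x) = 0 → nbrAvg (cylStep d N) w z ≤ χ

/-- The lattice hitting probability, raised by `ε`, near the fibre through `x`, glued to a barrier
`h` that is at most `ε` beyond squared distance `M`. -/
noncomputable def fibreFn (Q : ZLat ν → Measure (ℕ → ZLat ν)) (e : Fin ν ↪ Fin (d + 1))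
    (h : Cyl d N → ℝ) (M ε : ℝ) (x z : Cyl d N) : ℝ :=
  min (min 1 (h z))
    (if normSqOn (Finset.univ.map e) (z - x) < M then hitProb Q (transverse e (z - x)) + ε else 1)

variable {Q : ZLat ν → Measure (ℕ → ZLat ν)} {h : Cyl d N → ℝ}

lemma fibreFn_le_hitProb_add
    (hh : ∀ z, M ≤ normSqOn (Finset.univ.map e) (z - x) → h z ≤ ε) (z : Cyl d N) :
    fibreFn Q e h M ε x z ≤ hitProb Q (transverse e (z - x)) + ε := by
  by_cases hz : normSqOn (Finset.univ.map e) (z - x) < M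
  · exact (min_le_right _ _).trans_eq (if_pos hz)
  · calc fibreFn Q e h M ε x z ≤ h z := (min_le_left _ _).trans (min_le_right _ _)
      _ ≤ ε := hh z (not_lt.1 hz)
      _ ≤ _ := le_add_of_nonneg_left (hitProb_nonneg _)

lemma fibreFn_le_one (z : Cyl d N) : fibreFn Q e h M ε x z ≤ 1 :=
  (min_le_left _ _).trans (min_le_left _ _)

lemma nbrAvg_fibreFn_le_hitProb_add [NeZero ν] (hQ : IsLatRW ν Q) (hN : 4 < N)
    (hMN : M ≤ (N : ℝ) ^ 2 / 16)
    (hh : ∀ z, M ≤ normSqOn (Finset.univ.map e) (z - x) → h z ≤ ε) {z : Cyl d N}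
    (hz : normSqOn (Finset.univ.map e) (z - x) < M) :
    nbrAvg (cylStep d N) (fibreFn Q e h M ε x) z ≤ hitProb Q (transverse e (z - x)) + ε := by
  have havg := nbrAvg_le_of_le_transverse hN (g := fun y => hitProb Q y + ε)
    (b := hitProb Q (transverse e (z - x)) + ε) (fibreFn_le_hitProb_add hh) (hz.le.trans hMN)
    fun i hi η => by
      rw [← transverse_add_zsmul_cylStep_of_notMem (z - x) hi η, sub_add_eq_add_sub]
      exact fibreFn_le_hitProb_add hh _
  rw [nbrAvg_add, nbrAvg_const] at havg
  have hsuper := mul_le_mul_of_nonneg_left (nbrAvg_hitProb_le hQ (transverse e (z - x)))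
    (show 0 ≤ (ν : ℝ) / (d + 1) by positivity)
  linear_combination havg + hsuper

lemma nbrAvg_fibreFn_le_retProb [NeZero ν] (hQ : IsLatRW ν Q) (hN : 4 < N)
    (hε : 0 ≤ ε) (hh : ∀ z, M ≤ normSqOn (Finset.univ.map e) (z - x) → h z ≤ ε) {z : Cyl d N}
    (hz : normSqOn (Finset.univ.map e) (z - x) = 0) :
    nbrAvg (cylStep d N) (fibreFn Q e h M ε x) z ≤
      1 - ν / (d + 1) + ν / (d + 1) * retProb ν Q + ε := by
  have havg := nbrAvg_le_of_le_transverse hN (g := fun y => hitProb Q y + ε) (b := 1)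
    (fibreFn_le_hitProb_add hh) (by rw [hz]; positivity) fun _ _ _ => fibreFn_le_one _
  rw [nbrAvg_add, nbrAvg_const, transverse_eq_zero hz, nbrAvg_hitProb_zero hQ] at havg
  have hνd : (ν : ℝ) ≤ d + 1 := by
    simpa using Nat.cast_le (α := ℝ).2 (Fintype.card_le_of_embedding e)
  have := mul_le_of_le_one_left hε ((div_le_one (by positivity)).2 hνd)
  linarith

lemma IsBarrier.isFibreFn [NeZero ν] (hh : IsBarrier j (Finset.univ.map e) x p C h)
    (hQ : IsLatRW ν Q) (hN : 4 < N) (hM : 0 < M) (hMN : M ≤ (N : ℝ) ^ 2 / 16) (hε : 0 ≤ ε)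
    (hC : C * (M ^ (-p) + (N : ℝ) ^ (-(2 * p))) ≤ ε) :
    IsFibreFn j (Finset.univ.map e) x (1 - ν / (d + 1) + ν / (d + 1) * retProb ν Q + ε)
      (fibreFn Q e h M ε x) := by
  have hfar : ∀ z, M ≤ normSqOn (Finset.univ.map e) (z - x) → h z ≤ ε :=
    fun z hz => (hh.le z M hM hz).trans hC
  refine ⟨fun z => ?_, fun z hz => ?_, fibreFn_le_one, fun z hz hzx => ?_,
    fun z hz => nbrAvg_fibreFn_le_retProb hQ hN hε hfar hz⟩
  · have hone : nbrAvg (cylStep d N) (fibreFn Q e h M ε x) z ≤ 1 :=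
      (nbrAvg_mono (fun _ => fibreFn_le_one _) fun _ => fibreFn_le_one _).trans_eq
        (nbrAvg_const 1 z)
    have hbarrier : ∀ y, fibreFn Q e h M ε x y ≤ h y :=
      fun y => (min_le_left _ _).trans (min_le_right _ _)
    refine le_min (le_min hone ?_) ?_
    · exact (nbrAvg_mono (fun _ => hbarrier _) fun _ => hbarrier _).trans (hh.superharmonic z)
    · split_ifs with hz
      · exact nbrAvg_fibreFn_le_hitProb_add hQ hN hMN hfar hz
      · exact hone
  · refine le_min (le_min zero_le_one (hh.nonneg z hz)) ?_
    split_ifs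
    · exact add_nonneg (hitProb_nonneg _) hε
    · exact zero_le_one
  · refine le_min (le_min le_rfl (hh.one_le z hz hzx)) ?_
    rw [if_pos (hzx.trans_lt hM), transverse_eq_zero hzx, hitProb_zero hQ]
    linarith

theorem eventually_exists_isFibreFn (d : ℕ) (hν : 3 ≤ ν) (hQ : IsLatRW ν Q) (hε : 0 < ε) :
    ∀ᶠ N : ℕ in atTop, ∀ J : Finset (Fin (d + 1)), J.card = ν → ∀ (j : ℤ) (x : Cyl d N),
      ∃ w, IsFibreFn j J x (1 - ν / (d + 1) + ν / (d + 1) * retProb ν Q + ε) w := by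
  have : NeZero ν := ⟨by omega⟩
  have hp : (0 : ℝ) < (ν - 2) / 2 := by
    have : (3 : ℝ) ≤ ν := by exact_mod_cast hν
    linarith
  set p : ℝ := (ν - 2) / 2 with hpν
  obtain ⟨C, -, hC⟩ := exists_isBarrier d hp
  have hsmall : ∀ {q : ℝ}, 0 < q → ∀ᶠ N : ℕ in atTop, C * (N : ℝ) ^ (-q) ≤ ε / 2 := by
    intro q hq
    have hlim := ((tendsto_rpow_neg_atTop hq).comp tendsto_natCast_atTop_atTop).const_mul C
    rw [mul_zero] at hlim
    exact (hlim.eventually (gt_mem_nhds (half_pos hε))).mono fun N hN => le_of_lt hN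
  obtain ⟨M, hMC, hM⟩ := ((hsmall hp).and (eventually_gt_atTop 0)).exists
  filter_upwards [hsmall (q := 2 * p) (by linarith), eventually_gt_atTop 4,
    eventually_ge_atTop (16 * M)] with N hNC hN hNM J hJ j x
  obtain ⟨h, hh⟩ := hC N hN J (by rw [hJ, hpν]; ring) j x
  have he : Finset.univ.map (J.orderEmbOfFin hJ).toEmbedding = J :=
    Finset.map_orderEmbOfFin_univ J hJ
  rw [← he] at hh ⊢
  refine ⟨_, hh.isFibreFn hQ hN (M := M) (by exact_mod_cast hM) ?_ hε.le (by linarith)⟩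
  have hNM' : (16 * M : ℝ) ≤ N := by exact_mod_cast hNM
  have hN1 : (1 : ℝ) ≤ N := by exact_mod_cast (show 1 ≤ N by omega)
  nlinarith

end FibreFunction

/-! ### The probability of covering a set -/

section CoveringProbability

variable {d N m ν : ℕ} {J : Finset (Fin (d + 1))} {A : Finset (Cyl d N)} {j : ℤ} {x₀ : Cyl d N}
  {p C K θ χ : ℝ} {f : Cyl d N → ℝ} {h : Cyl d N → Cyl d N → ℝ}

lemma normSqOn_zero : normSqOn J (0 : Cyl d N) = 0 :=
  Finset.sum_eq_zero fun i _ => by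
    induction i using Fin.lastCases with
    | last => simp [coord_last]
    | cast l => simp [coord_castSucc]

lemma normSqOn_compl_projE_add_sub {I : Finset (Fin (d + 1))} (y : Lat d) {v : Lat d}
    (hv : ∀ i ∉ I, v i = 0) : normSqOn Iᶜ (projE d N (y + v) - projE d N y) = 0 := by
  rw [projE_add, add_sub_cancel_left]
  refine Finset.sum_eq_zero fun i hi => ?_
  have hvi : v i = 0 := hv i (Finset.mem_compl.1 hi)
  induction i using Fin.lastCases with
  | last => simp [coord_last, projE, hvi]
  | cast l => simp [coord_castSucc, projE, hvi]

lemma mem_Cblk_iff {x : Cyl d N} : x ∈ Cblk d N j ↔ 4 * |x.2 - j * N| ≤ 3 * N := by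
  rw [← Int.cast_le (R := ℝ)]
  push_cast
  rw [← le_div_iff₀' four_pos, abs_le]
  exact ⟨fun h => ⟨by linarith [h.1], by linarith [h.2]⟩,
    fun h => ⟨by linarith [h.1], by linarith [h.2]⟩⟩

lemma IsBarrier.le_of_abs_height_eq (hN : 0 < N) {x z : Cyl d N} {u : Cyl d N → ℝ}
    (hu : IsBarrier j Finset.univ x p C u) (hx : 4 * |x.2 - j * N| ≤ 3 * N)
    (hz : |z.2 - j * N| = N) : u z ≤ C * (16 ^ p + 1) * (N : ℝ) ^ (-(2 * p)) := by
  have hheight : (N : ℤ) ≤ 4 * |(z - x).2| := by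
    have := abs_sub_abs_le_abs_sub (z.2 - j * N) (x.2 - j * N)
    rw [sub_sub_sub_cancel_right] at this
    rw [Prod.snd_sub]
    omega
  have hnorm : (N : ℝ) ^ 2 / 16 ≤ normSqOn Finset.univ (z - x) := by
    refine le_trans ?_ (sq_coord_le_normSqOn (z - x) (Finset.mem_univ (Fin.last d)))
    have hheight' : (N : ℝ) ≤ 4 * |((z - x).2 : ℝ)| := by exact_mod_cast hheight
    have hsq := pow_le_pow_left₀ N.cast_nonneg hheight' 2
    rw [mul_pow, sq_abs] at hsq
    rw [coord_last]
    linarith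
  have hpow : ((N : ℝ) ^ 2 / 16) ^ (-p) = 16 ^ p * (N : ℝ) ^ (-(2 * p)) := by
    rw [Real.div_rpow (by positivity) (by norm_num), ← Real.rpow_ofNat (N : ℝ) 2,
      ← Real.rpow_mul N.cast_nonneg, Real.rpow_neg (by norm_num), div_inv_eq_mul, mul_comm,
      mul_neg]
  refine (hu.le z _ (by positivity) hnorm).trans_eq ?_
  rw [hpow]
  ring

lemma IsFibreFn.isCoverWeight (hN : 0 < N) (hf : IsFibreFn j J x₀ χ f)
    (hh : ∀ x, IsBarrier j Finset.univ x p C (h x)) (hA : ∀ x ∈ A, 4 * |x.2 - j * N| ≤ 3 * N)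
    (hAJ : ∀ x ∈ A, normSqOn J (x - x₀) = 0) (hK : 0 ≤ K) (hKθ : 1 + K * χ ≤ θ * (1 + K)) :
    IsCoverWeight d N j A θ (1 + K * (A.card * (C * (16 ^ p + 1) * (N : ℝ) ^ (-(2 * p)))))
      (fun z => 1 + K * min (f z) (∑ x ∈ A, h x z)) := by
  have havg : ∀ z, nbrAvg (cylStep d N) (fun y => 1 + K * min (f y) (∑ x ∈ A, h x y)) z =
      1 + K * nbrAvg (cylStep d N) (fun y => min (f y) (∑ x ∈ A, h x y)) z := fun z => by
    rw [nbrAvg_add, nbrAvg_const, nbrAvg_const_mul]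
  refine ⟨fun z hz => ?_, fun z => ?_, fun z hz => ?_, fun z hz => ?_⟩
  · exact le_add_of_nonneg_right (mul_nonneg hK
      (le_min (hf.nonneg z hz) (Finset.sum_nonneg fun x _ => (hh x).nonneg z hz)))
  · rw [havg]
    gcongr
    refine (nbrAvg_min_le _ _ z).trans (min_le_min (hf.superharmonic z) ?_)
    rw [nbrAvg_sum]
    exact Finset.sum_le_sum fun x _ => (hh x).superharmonic z
  · have hstrip : |z.2 - j * N| ≤ 2 * N := by linarith [hA z hz]
    have hsum : 1 ≤ ∑ x ∈ A, h x z :=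
      ((hh z).one_le z hstrip (by rw [sub_self, normSqOn_zero])).trans
        (Finset.single_le_sum (f := fun x => h x z) (fun x _ => (hh x).nonneg z hstrip) hz)
    rw [havg, (le_min (hf.one_le z hstrip (hAJ z hz)) hsum).antisymm'
      ((min_le_left _ _).trans (hf.le_one z)), mul_one]
    refine le_trans ?_ hKθ
    gcongr
    exact (nbrAvg_mono (g := f) (fun _ => min_le_left _ _) fun _ => min_le_left _ _).trans
      (hf.nbrAvg_le z (hAJ z hz))
  · gcongr
    refine (min_le_right _ _).trans ?_
    rw [← nsmul_eq_mul]
    exact Finset.sum_le_card_nsmul _ _ _ fun x hx => (hh x).le_of_abs_height_eq hN (hA x hx) hz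

theorem exists_forall_real_subset_ranE_DD_le (hν : 3 ≤ ν) (hmν : m + ν = d + 1)
    {Q : ZLat ν → Measure (ℕ → ZLat ν)} (hQ : IsLatRW ν Q) (hθ0 : 0 ≤ θ) (hθ1 : θ ≤ 1)
    (hθ : 1 - ν / (d + 1) + ν / (d + 1) * retProb ν Q < θ) :
    ∃ M ≥ 1, ∃ C ≥ 0, ∀ᶠ N : ℕ in atTop, ∀ Pl : Cyl d N → Measure (ℕ → Cyl d N),
      IsCylRW d N Pl → ∀ j, ∀ F ∈ Lcoll d N m, ∀ A : Finset (Cyl d N), ↑A ⊆ F ∩ Cblk d N j →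
      ∀ k z, (Pl z).real {ω | ↑A ⊆ ranE ω (DD d N j k ω)} ≤
        θ ^ A.card * M * (1 + C * A.card / (N : ℝ) ^ (d - 1)) ^ k := by
  set ε : ℝ := (θ - (1 - ν / (d + 1) + ν / (d + 1) * retProb ν Q)) / 2 with hε
  have hε0 : 0 < ε := half_pos (sub_pos.2 hθ)
  have hd : (1 : ℝ) < d := by exact_mod_cast (show 1 < d by omega)
  have hp : (0 : ℝ) < (d - 1) / 2 := by linarith
  obtain ⟨C, hC, hbarrier⟩ := exists_isBarrier d hp
  set K : ℝ := (1 - θ) / ε with hK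
  have hK0 : 0 ≤ K := div_nonneg (by linarith) hε0.le
  refine ⟨1 + K, by linarith, K * (C * (16 ^ (((d : ℝ) - 1) / 2) + 1)), by positivity, ?_⟩
  filter_upwards [eventually_exists_isFibreFn d hν hQ hε0, eventually_gt_atTop 4]
    with N hfibre hN Pl hPl j F hF A hA k z
  obtain ⟨I, hI, y, rfl⟩ := hF
  obtain ⟨f, hf⟩ := hfibre Iᶜ (by rw [Finset.card_compl, Fintype.card_fin]; omega) j (projE d N y)
  choose h hh using hbarrier N hN Finset.univ (by rw [Finset.card_fin]; push_cast; ring) j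
  have hAC : ∀ x ∈ A, 4 * |x.2 - j * N| ≤ 3 * N :=
    fun x hx => mem_Cblk_iff.1 (hA hx).2
  have hψ := hf.isCoverWeight (K := K) (θ := θ) (by omega) hh hAC
    (fun x hx => by
      obtain ⟨v, hv, rfl⟩ := (hA hx).1
      exact normSqOn_compl_projE_add_sub y hv) hK0
    (by
      have hKε : K * ε = 1 - θ := div_mul_cancel₀ _ hε0.ne'
      linear_combination 2 * K * hε - hKε)
  have hrate : K * (A.card * (C * (16 ^ (((d : ℝ) - 1) / 2) + 1) *
      (N : ℝ) ^ (-(2 * (((d : ℝ) - 1) / 2))))) =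
      K * (C * (16 ^ (((d : ℝ) - 1) / 2) + 1)) * A.card / (N : ℝ) ^ (d - 1) := by
    rw [Real.rpow_neg N.cast_nonneg, mul_div_cancel₀ _ two_ne_zero,
      ← Nat.cast_pred (show 0 < d by omega), Real.rpow_natCast]
    ring
  rw [hrate] at hψ
  exact hψ.real_subset_ranE_DD_le hPl (by omega) (fun x hx => by have := hAC x hx; omega) hθ0
    (le_add_of_nonneg_right (by positivity)) (by linarith)
    (fun z => by gcongr; exact mul_le_of_le_one_right hK0 ((min_le_left _ _).trans (hf.le_one z)))
    k z

end CoveringProbability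

/-! ### Mod 2 cochains on a periodic strip -/

section Strip

variable {V : Type*} [AddCommGroup V] {N : ℕ} {e₁ e₂ : V} {ξ : V → ZMod N} {Λ : Set V}
  {E : V → V → ZMod 2} {f : V → ZMod 2} {o u v : V} {l : ℕ}

/-- The box of radius `l` around `k` in the plane spanned by `e₁` and `e₂`; it localizes the
`*`-connected components of the visited set. -/
def box (e₁ e₂ k : V) (l : ℕ) : Set V :=
  {v | ∃ a b : ℤ, |a| ≤ l ∧ |b| ≤ l ∧ v = k + a • e₁ + b • e₂}

/-- `f` is a primitive on `Λ` of the `ℤ/2`-valued `1`-cochain `E`, where `E u v` is the value of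
the cochain on the edge from `u` to `v`. Edges are steps by `e₁` or `e₂` between points of `Λ`, so a
primitive of `0` is a function that is constant along the edges of `Λ`. -/
def IsPrimitive (e₁ e₂ : V) (Λ : Set V) (E : V → V → ZMod 2) (f : V → ZMod 2) : Prop :=
  ∀ e, e = e₁ ∨ e = e₂ → ∀ v ∈ Λ, v + e ∈ Λ → f (v + e) = f v + E v (v + e)

/-- `E` sums to zero around the unit squares of `Λ`. -/
def IsCocycle (e₁ e₂ : V) (Λ : Set V) (E : V → V → ZMod 2) : Prop :=
  ∀ v ∈ Λ, v + e₂ ∈ Λ →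
    E v (v + e₁) + E (v + e₁) (v + e₁ + e₂) + E (v + e₂) (v + e₁ + e₂) + E v (v + e₂) = 0

/-- `Λ` is a strip of the lattice spanned by `e₁` and `e₂`, closed up with period `N` in the
direction `e₁`; the map `ξ` is the cyclic coordinate along `e₁`. Connectedness of the strip is
expressed by functions that are constant along edges. -/
structure IsStrip (N : ℕ) (e₁ e₂ : V) (ξ : V → ZMod N) (Λ : Set V) : Prop where
  period : N • e₁ = 0
  coord_add_left : ∀ v, ξ (v + e₁) = ξ v + 1
  coord_add_right : ∀ v, ξ (v + e₂) = ξ v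
  add_mem : ∀ v ∈ Λ, v + e₁ ∈ Λ
  eq_of_isPrimitive : ∀ g, IsPrimitive e₁ e₂ Λ 0 g → ∀ u ∈ Λ, ∀ v ∈ Λ, g u = g v

lemma box_mono {k : V} : Monotone (box e₁ e₂ k) := by
  rintro l m h v ⟨a, b, ha, hb, hv⟩
  have hlm : (l : ℤ) ≤ m := by exact_mod_cast h
  exact ⟨a, b, ha.trans hlm, hb.trans hlm, hv⟩

lemma IsPrimitive.sum {ι : Type*} {s : Finset ι} {F : ι → V → V → ZMod 2} {g : ι → V → ZMod 2}
    (h : ∀ i ∈ s, IsPrimitive e₁ e₂ Λ (F i) (g i)) :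
    IsPrimitive e₁ e₂ Λ (∑ i ∈ s, F i) (∑ i ∈ s, g i) := by
  intro e he v hv hve
  simp only [Finset.sum_apply]
  rw [← Finset.sum_add_distrib]
  exact Finset.sum_congr rfl fun i hi => h i hi e he v hv hve

/-- The integral of the cochain `E` along `n` steps `e₁` starting from `u`. -/
def lineSum (e₁ : V) (E : V → V → ZMod 2) (n : ℕ) (u : V) : ZMod 2 :=
  ∑ i ∈ Finset.range n, E (u + i • e₁) (u + i • e₁ + e₁)

lemma lineSum_succ (n : ℕ) (u : V) :
    lineSum e₁ E (n + 1) u = lineSum e₁ E n u + E (u + n • e₁) (u + n • e₁ + e₁) :=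
  Finset.sum_range_succ _ _

lemma lineSum_succ' (n : ℕ) (u : V) :
    lineSum e₁ E (n + 1) u = lineSum e₁ E n (u + e₁) + E u (u + e₁) := by
  simp only [lineSum, Finset.sum_range_succ', zero_smul, add_zero, succ_nsmul', ← add_assoc]

/-- The offset of `v` from `o` along `e₁`, as a number in `[0, N)`. -/
def offset (ξ : V → ZMod N) (o v : V) : ℕ := (ξ v - ξ o).val

/-- The point of the column of `o` from which `v` is reached by `offset ξ o v` steps `e₁`. -/
def base (e₁ : V) (ξ : V → ZMod N) (o v : V) : V := v - offset ξ o v • e₁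

lemma base_add_offset_nsmul : base e₁ ξ o v + offset ξ o v • e₁ = v := sub_add_cancel _ _

namespace IsStrip

section Coordinates

variable (h : IsStrip N e₁ e₂ ξ Λ)
include h

lemma add_nsmul_mem (hv : v ∈ Λ) (n : ℕ) : v + n • e₁ ∈ Λ := by
  induction n with
  | zero => rwa [zero_smul, add_zero]
  | succ n ih => rw [succ_nsmul, ← add_assoc]; exact h.add_mem _ ih

lemma coord_add_nsmul (v : V) (n : ℕ) : ξ (v + n • e₁) = ξ v + n := by
  induction n with
  | zero => simp
  | succ n ih => rw [succ_nsmul, ← add_assoc, h.coord_add_left, ih, Nat.cast_succ, add_assoc]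

lemma coord_add_zsmul (v : V) (b : ℤ) : ξ (v + b • e₂) = ξ v := by
  induction b with
  | zero => simp
  | succ n ih => rw [add_smul, one_smul, ← add_assoc, h.coord_add_right, ih]
  | pred n ih => rw [← h.coord_add_right, add_assoc, ← add_one_zsmul, sub_add_cancel, ih]

lemma mod_nsmul (n : ℕ) : (n % N) • e₁ = n • e₁ := by
  conv_rhs => rw [← Nat.mod_add_div n N, add_smul, mul_nsmul, h.period, nsmul_zero, add_zero]

lemma offset_of_coord_eq (hu : ξ u = ξ o) (n : ℕ) : offset ξ o (u + n • e₁) = n % N := by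
  rw [offset, h.coord_add_nsmul, hu, add_sub_cancel_left, ZMod.val_natCast]

lemma offset_add_right : offset ξ o (v + e₂) = offset ξ o v := by
  rw [offset, h.coord_add_right, offset]

lemma base_add_right : base e₁ ξ o (v + e₂) = base e₁ ξ o v + e₂ := by
  rw [base, h.offset_add_right, base, sub_add_eq_add_sub]

lemma base_of_coord_eq (hu : ξ u = ξ o) (n : ℕ) : base e₁ ξ o (u + n • e₁) = u := by
  rw [base, h.offset_of_coord_eq hu, h.mod_nsmul, add_sub_cancel_right]

lemma mem_box_iff (hN : 2 * l + 1 < N) : v ∈ box e₁ e₂ (o + (l + 1) • e₁) l ↔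
    offset ξ o v ∈ Set.Icc 1 (2 * l + 1) ∧ ∃ b : ℤ, |b| ≤ l ∧ base e₁ ξ o v = o + b • e₂ := by
  constructor
  · rintro ⟨a, b, ha, hb, rfl⟩
    rw [abs_le] at ha
    lift a + (l + 1) to ℕ using by lia with n hn
    have hv : o + (l + 1) • e₁ + a • e₁ + b • e₂ = o + b • e₂ + n • e₁ := by
      rw [← natCast_zsmul e₁ n, ← natCast_zsmul e₁ (l + 1), hn]
      push_cast
      module
    have ho := h.coord_add_zsmul o b
    rw [hv, h.offset_of_coord_eq ho, h.base_of_coord_eq ho, Nat.mod_eq_of_lt (by lia)]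
    exact ⟨⟨by lia, by lia⟩, b, hb, rfl⟩
  · rintro ⟨ht, b, hb, hv⟩
    obtain ⟨ht₁, ht₂⟩ := ht
    refine ⟨(offset ξ o v : ℤ) - (l + 1), b, abs_le.2 (by lia), hb, ?_⟩
    have hv' := base_add_offset_nsmul (e₁ := e₁) (ξ := ξ) (o := o) (v := v)
    rw [hv, ← natCast_zsmul e₁ (offset ξ o v)] at hv'
    rw [← natCast_zsmul e₁ (l + 1)]
    push_cast
    exact hv'.symm.trans (by module)

variable [NeZero N]

lemma coord_base : ξ (base e₁ ξ o v) = ξ o := by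
  have := h.coord_add_nsmul (base e₁ ξ o v) (offset ξ o v)
  rw [base_add_offset_nsmul, offset, ZMod.natCast_zmod_val] at this
  linear_combination -this

lemma base_mem (hv : v ∈ Λ) : base e₁ ξ o v ∈ Λ := by
  have hcancel : (N - offset ξ o v) • e₁ + offset ξ o v • e₁ = 0 := by
    rw [← add_smul, offset, Nat.sub_add_cancel (ZMod.val_lt _).le, h.period]
  rw [base, sub_eq_add_neg, ← eq_neg_of_add_eq_zero_left hcancel]
  exact h.add_nsmul_mem hv _

lemma base_add_left : base e₁ ξ o (v + e₁) = base e₁ ξ o v := by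
  conv_lhs => rw [← base_add_offset_nsmul (e₁ := e₁) (ξ := ξ) (o := o) (v := v), add_assoc,
    ← succ_nsmul, h.base_of_coord_eq h.coord_base]

lemma offset_add_left : offset ξ o (v + e₁) = (offset ξ o v + 1) % N := by
  conv_lhs => rw [← base_add_offset_nsmul (e₁ := e₁) (ξ := ξ) (o := o) (v := v), add_assoc,
    ← succ_nsmul, h.offset_of_coord_eq h.coord_base]

lemma base_add_nsmul_mem_box_iff (hN : 2 * l + 1 < N) (n : ℕ) :
    base e₁ ξ o v + n • e₁ ∈ box e₁ e₂ (o + (l + 1) • e₁) l ↔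
      n % N ∈ Set.Icc 1 (2 * l + 1) ∧ ∃ b : ℤ, |b| ≤ l ∧ base e₁ ξ o v = o + b • e₂ := by
  rw [h.mem_box_iff hN, h.offset_of_coord_eq h.coord_base, h.base_of_coord_eq h.coord_base]

lemma base_notMem_box (hN : 2 * l + 1 < N) (v : V) :
    base e₁ ξ o v ∉ box e₁ e₂ (o + (l + 1) • e₁) l := fun hv => by
  rw [← add_zero (base e₁ ξ o v), ← zero_smul ℕ e₁, h.base_add_nsmul_mem_box_iff hN] at hv
  simpa using hv.1

lemma mem_box_of_lineSum_base_ne_zero (hN : 2 * l + 1 < N)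
    (hperiod : ∀ u ∈ Λ, lineSum e₁ E N u = 0)
    (hsupp : ∀ u v, u ∉ box e₁ e₂ (o + (l + 1) • e₁) l → v ∉ box e₁ e₂ (o + (l + 1) • e₁) l →
      E u v = 0)
    (hv : v ∈ Λ) (hne : lineSum e₁ E (offset ξ o v) (base e₁ ξ o v) ≠ 0) :
    v ∈ box e₁ e₂ (o + (l + 1) • e₁) l := by
  have hterm : ∀ i, base e₁ ξ o v + i • e₁ ∉ box e₁ e₂ (o + (l + 1) • e₁) l →
      base e₁ ξ o v + (i + 1) • e₁ ∉ box e₁ e₂ (o + (l + 1) • e₁) l →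
      E (base e₁ ξ o v + i • e₁) (base e₁ ξ o v + i • e₁ + e₁) = 0 := fun i hi hi' =>
    hsupp _ _ hi (by rwa [add_assoc, ← succ_nsmul])
  simp only [h.base_add_nsmul_mem_box_iff hN] at hterm
  obtain ⟨i, hi, hne'⟩ := Finset.exists_ne_zero_of_sum_ne_zero hne
  rw [Finset.mem_range] at hi
  refine (h.mem_box_iff hN).2 ⟨⟨by lia, ?_⟩, ?_⟩
  · by_contra! hlt
    refine hne (Eq.trans ?_ (hperiod _ (h.base_mem (o := o) hv)))
    refine Finset.sum_subset (Finset.range_mono (ZMod.val_lt _).le) fun i hiN hit => ?_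
    rw [Finset.mem_range] at hiN hit
    refine hterm i (fun hm => ?_) fun hm => ?_
    · have hmod := hm.1.2
      rw [Nat.mod_eq_of_lt hiN] at hmod
      lia
    · obtain ⟨hmod₁, hmod₂⟩ := hm.1
      rcases Nat.lt_or_ge (i + 1) N with hlt' | hge
      · rw [Nat.mod_eq_of_lt hlt'] at hmod₂
        lia
      · rw [le_antisymm hiN hge, Nat.mod_self] at hmod₁
        lia
  · by_contra hcol
    exact hne' (hterm i (fun hm => hcol hm.2) fun hm => hcol hm.2)

end Coordinates

section Integration

variable (h : IsStrip N e₁ e₂ ξ Λ) (hE : IsCocycle e₁ e₂ Λ E)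
include h hE

lemma lineSum_add_lineSum (hu : u ∈ Λ) (hu' : u + e₂ ∈ Λ) (n : ℕ) :
    lineSum e₁ E n u + lineSum e₁ E n (u + e₂) =
      E (u + n • e₁) (u + n • e₁ + e₂) + E u (u + e₂) := by
  induction n with
  | zero => simp [lineSum, CharTwo.add_self_eq_zero]
  | succ n ih =>
    have hsq := hE (u + n • e₁) (h.add_nsmul_mem hu n)
      (by rw [add_right_comm]; exact h.add_nsmul_mem hu' n)
    rw [lineSum_succ, lineSum_succ, succ_nsmul, ← add_assoc u, add_right_comm u e₂,
      add_right_comm (u + n • e₁) e₂]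
    linear_combination ih + hsq - CharTwo.add_self_eq_zero
      (E (u + n • e₁ + e₁) (u + n • e₁ + e₁ + e₂))

lemma isPrimitive_lineSum_period : IsPrimitive e₁ e₂ Λ 0 (lineSum e₁ E N) := by
  rintro e (rfl | rfl) v hv hve
  · have hperiod := (lineSum_succ' (e₁ := e) N v).symm.trans (lineSum_succ (E := E) N v)
    rw [h.period, add_zero] at hperiod
    simpa using add_right_cancel hperiod
  · have hdiff := h.lineSum_add_lineSum hE hv hve N
    rw [h.period, add_zero, CharTwo.add_self_eq_zero, CharTwo.add_eq_zero] at hdiff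
    simpa using hdiff.symm

lemma lineSum_period_eq_zero {k : V} (hrow : ∃ v ∈ Λ, ∀ i : ℕ, v + i • e₁ ∉ box e₁ e₂ k l)
    (hsupp : ∀ u v, u ∉ box e₁ e₂ k l → v ∉ box e₁ e₂ k l → E u v = 0) (hu : u ∈ Λ) :
    lineSum e₁ E N u = 0 := by
  obtain ⟨v, hv, hvbox⟩ := hrow
  rw [h.eq_of_isPrimitive _ (h.isPrimitive_lineSum_period hE) u hu v hv]
  refine Finset.sum_eq_zero fun i _ => hsupp _ _ (hvbox i) ?_
  rw [add_assoc, ← succ_nsmul]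
  exact hvbox (i + 1)

lemma isPrimitive_lineSum_base [NeZero N] (hperiod : ∀ u ∈ Λ, lineSum e₁ E N u = 0)
    (hbase : ∀ v, E (base e₁ ξ o v) (base e₁ ξ o v + e₂) = 0) :
    IsPrimitive e₁ e₂ Λ E fun v => lineSum e₁ E (offset ξ o v) (base e₁ ξ o v) := by
  rintro e (rfl | rfl) v hv hve
  · have hsucc := lineSum_succ (e₁ := e) (E := E) (offset ξ o v) (base e ξ o v)
    rw [base_add_offset_nsmul] at hsucc
    simp only [h.base_add_left, h.offset_add_left, ← hsucc]
    rcases Nat.lt_or_ge (offset ξ o v + 1) N with hlt | hge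
    · rw [Nat.mod_eq_of_lt hlt]
    · have heq : offset ξ o v + 1 = N := le_antisymm (ZMod.val_lt _) hge
      rw [heq, Nat.mod_self, hperiod _ (h.base_mem hv)]
      rfl
  · have hdiff := h.lineSum_add_lineSum hE (h.base_mem (o := o) hv)
      (by rw [← h.base_add_right]; exact h.base_mem hve) (offset ξ o v)
    rw [base_add_offset_nsmul, hbase, add_zero] at hdiff
    simp only [h.base_add_right, h.offset_add_right, ← hdiff]
    rw [CharTwo.add_cancel_left]

/-
The circulation of `E` around the strip does not depend on the row, and vanishes on a row that
misses the box; hence the line integral along `e₁`, started in the column just to the left of the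
box, is a primitive which vanishes outside the box.
-/
lemma exists_isPrimitive {k : V} (hN : 2 * l + 1 < N)
    (hrow : ∃ v ∈ Λ, ∀ i : ℕ, v + i • e₁ ∉ box e₁ e₂ k l)
    (hsupp : ∀ u v, u ∉ box e₁ e₂ k l → v ∉ box e₁ e₂ k l → E u v = 0) :
    ∃ f, IsPrimitive e₁ e₂ Λ E f ∧ ∀ v ∈ Λ, f v ≠ 0 → v ∈ box e₁ e₂ k l := by
  have : NeZero N := ⟨by lia⟩
  have hperiod : ∀ u ∈ Λ, lineSum e₁ E N u = 0 := fun u hu =>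
    h.lineSum_period_eq_zero hE hrow hsupp hu
  obtain ⟨o, rfl⟩ : ∃ o, k = o + (l + 1) • e₁ := ⟨k - (l + 1) • e₁, (sub_add_cancel _ _).symm⟩
  have hbase : ∀ v, E (base e₁ ξ o v) (base e₁ ξ o v + e₂) = 0 := fun v =>
    hsupp _ _ (h.base_notMem_box hN v) (by rw [← h.base_add_right]; exact h.base_notMem_box hN _)
  exact ⟨_, h.isPrimitive_lineSum_base hE hperiod hbase, fun v hv =>
    h.mem_box_of_lineSum_base_ne_zero hN hperiod hsupp hv⟩

end Integration

end IsStrip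

end Strip

/-! ### Duality between connection and `*`-connection -/

section LocalCoboundary

variable {V : Type*} {Y B : Set V} {χ : V → ZMod 2} {u v : V}

/-- The part of the coboundary of `χ` carried by the edges that touch `B`. -/
noncomputable def localCoboundary (B : Set V) (χ : V → ZMod 2) (u v : V) : ZMod 2 :=
  if u ∈ B ∨ v ∈ B then χ u + χ v else 0

lemma localCoboundary_of_notMem (hu : u ∉ B) (hv : v ∉ B) : localCoboundary B χ u v = 0 :=
  if_neg (not_or.2 ⟨hu, hv⟩)

lemma localCoboundary_eq_add (hu : u ∈ Y → u ∈ B) (hv : v ∈ Y → v ∈ B)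
    (hχ : u ∉ Y → v ∉ Y → χ u = χ v) : localCoboundary B χ u v = χ u + χ v := by
  by_cases h : u ∈ B ∨ v ∈ B
  · exact if_pos h
  · obtain ⟨hu', hv'⟩ := not_or.1 h
    rw [localCoboundary_of_notMem hu' hv', hχ (mt hu hu') (mt hv hv'), CharTwo.add_self_eq_zero]

end LocalCoboundary

section Duality

variable {V : Type*} [AddCommGroup V] {N : ℕ} {e₁ e₂ : V} {ξ : V → ZMod N} {Λ Y B : Set V}
  {χ : V → ZMod 2} {k p q u v w : V} {l m : ℕ}

lemma self_mem_box (k : V) (l : ℕ) : k ∈ box e₁ e₂ k l := ⟨0, 0, by simp, by simp, by simp⟩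

lemma mem_box_symm (h : v ∈ box e₁ e₂ u l) : u ∈ box e₁ e₂ v l := by
  obtain ⟨a, b, ha, hb, rfl⟩ := h
  exact ⟨-a, -b, by rwa [abs_neg], by rwa [abs_neg], by module⟩

lemma mem_box_trans (hv : v ∈ box e₁ e₂ u l) (hw : w ∈ box e₁ e₂ v m) :
    w ∈ box e₁ e₂ u (l + m) := by
  obtain ⟨a, b, ha, hb, rfl⟩ := hv
  obtain ⟨a', b', ha', hb', rfl⟩ := hw
  refine ⟨a + a', b + b', ?_, ?_, by module⟩ <;> push_cast
  · exact (abs_add_le _ _).trans (add_le_add ha ha')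
  · exact (abs_add_le _ _).trans (add_le_add hb hb')

lemma mem_box_of_mem_square (hu : u ∈ ({v, v + e₁, v + e₁ + e₂, v + e₂} : Set V))
    (hw : w ∈ ({v, v + e₁, v + e₁ + e₂, v + e₂} : Set V)) : w ∈ box e₁ e₂ u 1 := by
  have hcorner : ∀ x ∈ ({v, v + e₁, v + e₁ + e₂, v + e₂} : Set V),
      ∃ s t : ℤ, s ∈ Set.Icc 0 1 ∧ t ∈ Set.Icc 0 1 ∧ x = v + s • e₁ + t • e₂ := by
    rintro x (rfl | rfl | rfl | rfl)
    exacts [⟨0, 0, by simp⟩, ⟨1, 0, by simp⟩, ⟨1, 1, by simp⟩, ⟨0, 1, by simp⟩]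
  obtain ⟨s, t, ⟨hs₀, hs₁⟩, ⟨ht₀, ht₁⟩, rfl⟩ := hcorner u hu
  obtain ⟨s', t', ⟨hs₀', hs₁'⟩, ⟨ht₀', ht₁'⟩, rfl⟩ := hcorner w hw
  exact ⟨s' - s, t' - t, abs_le.2 (by lia), abs_le.2 (by lia), by module⟩

/-- The graph of `*`-adjacency on `Y`, within planes spanned by `e₁` and `e₂`. -/
def starGraph (e₁ e₂ : V) (Y : Set V) : SimpleGraph V where
  Adj u v := u ≠ v ∧ u ∈ Y ∧ v ∈ Y ∧ v ∈ box e₁ e₂ u 1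
  symm := ⟨fun _ _ h => ⟨h.1.symm, h.2.2.1, h.2.1, mem_box_symm h.2.2.2⟩⟩
  loopless := ⟨fun _ h => h.1 rfl⟩

lemma mem_box_of_walk (w : (starGraph e₁ e₂ Y).Walk u v) : v ∈ box e₁ e₂ u w.length := by
  induction w with
  | nil => exact self_mem_box _ _
  | cons h _ ih => rw [SimpleGraph.Walk.length_cons, add_comm]; exact mem_box_trans h.2.2.2 ih

lemma connectedComponentMk_eq_of_mem_box (hu : u ∈ Y) (hv : v ∈ Y) (huv : v ∈ box e₁ e₂ u 1) :
    (starGraph e₁ e₂ Y).connectedComponentMk u = (starGraph e₁ e₂ Y).connectedComponentMk v := by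
  rcases eq_or_ne u v with rfl | hne
  · rfl
  · have hadj : (starGraph e₁ e₂ Y).Adj u v := ⟨hne, hu, hv, huv⟩
    exact SimpleGraph.ConnectedComponent.sound hadj.reachable

lemma eq_add_of_isPrimitive_zero (hχ : IsPrimitive e₁ e₂ (Λ \ Y) 0 χ) {e : V}
    (he : e = e₁ ∨ e = e₂) (hv : v ∈ Λ) (hve : v + e ∈ Λ) (hvY : v ∉ Y) (hveY : v + e ∉ Y) :
    χ v = χ (v + e) :=
  ((hχ e he v ⟨hv, hvY⟩ ⟨hve, hveY⟩).trans (add_zero _)).symm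

lemma isCocycle_localCoboundary (hΛ : ∀ v ∈ Λ, v + e₁ ∈ Λ)
    (hχ : IsPrimitive e₁ e₂ (Λ \ Y) 0 χ) (hB : ∀ u ∈ B, ∀ v ∈ Y, v ∈ box e₁ e₂ u 1 → v ∈ B) :
    IsCocycle e₁ e₂ Λ (localCoboundary B χ) := by
  intro v hv hv₂
  have hv₁ := hΛ _ hv
  have hcomm : v + e₂ + e₁ = v + e₁ + e₂ := add_right_comm _ _ _
  have hv₁₂ : v + e₁ + e₂ ∈ Λ := hcomm ▸ hΛ _ hv₂
  by_cases hany : ∃ u ∈ ({v, v + e₁, v + e₁ + e₂, v + e₂} : Set V), u ∈ B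
  · obtain ⟨u, husq, huB⟩ := hany
    have hin : ∀ w ∈ ({v, v + e₁, v + e₁ + e₂, v + e₂} : Set V), w ∈ Y → w ∈ B :=
      fun w hw hwY => hB u huB w hwY (mem_box_of_mem_square husq hw)
    simp only [Set.mem_insert_iff, Set.mem_singleton_iff, forall_eq_or_imp, forall_eq] at hin
    obtain ⟨h₀, h₁, h₁₂, h₂⟩ := hin
    rw [localCoboundary_eq_add h₀ h₁ (eq_add_of_isPrimitive_zero hχ (.inl rfl) hv hv₁),
      localCoboundary_eq_add h₁ h₁₂ (eq_add_of_isPrimitive_zero hχ (.inr rfl) hv₁ hv₁₂),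
      localCoboundary_eq_add h₂ h₁₂
        (hcomm ▸ eq_add_of_isPrimitive_zero hχ (.inl rfl) hv₂ (hcomm ▸ hv₁₂)),
      localCoboundary_eq_add h₀ h₂ (eq_add_of_isPrimitive_zero hχ (.inr rfl) hv hv₂)]
    have htwo : (2 : ZMod 2) = 0 := CharTwo.two_eq_zero
    linear_combination (χ v + χ (v + e₁) + χ (v + e₁ + e₂) + χ (v + e₂)) * htwo
  · simp only [Set.mem_insert_iff, Set.mem_singleton_iff, exists_eq_or_imp, exists_eq_left,
      not_or] at hany
    obtain ⟨n₀, n₁, n₁₂, n₂⟩ := hany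
    simp only [localCoboundary_of_notMem, n₀, n₁, n₁₂, n₂, not_false_eq_true, add_zero]

/-- The finite set of `*`-connected components of a finite set `Y`. -/
noncomputable def starComponents (e₁ e₂ : V) (hY : Y.Finite) :
    Finset (starGraph e₁ e₂ Y).ConnectedComponent :=
  hY.toFinset.image (starGraph e₁ e₂ Y).connectedComponentMk

lemma connectedComponentMk_mem_starComponents (hY : Y.Finite) (hu : u ∈ Y) :
    (starGraph e₁ e₂ Y).connectedComponentMk u ∈ starComponents e₁ e₂ hY :=
  Finset.mem_image_of_mem _ (hY.mem_toFinset.2 hu)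

lemma sum_localCoboundary (hY : Y.Finite) (huv : v ∈ box e₁ e₂ u 1)
    (hχ : u ∉ Y → v ∉ Y → χ u = χ v) :
    ∑ c ∈ starComponents e₁ e₂ hY, localCoboundary (Y ∩ c.supp) χ u v = χ u + χ v := by
  by_cases hblocked : u ∈ Y ∨ v ∈ Y
  · obtain ⟨c, hc, hiff⟩ : ∃ c ∈ starComponents e₁ e₂ hY,
        ∀ c', (u ∈ Y ∩ c'.supp ∨ v ∈ Y ∩ c'.supp) ↔ c = c' := by
      have heq := fun hu hv => connectedComponentMk_eq_of_mem_box (Y := Y) hu hv huv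
      rcases hblocked with hu | hv
      · refine ⟨_, connectedComponentMk_mem_starComponents hY hu, fun c' =>
          ⟨?_, fun h => .inl ⟨hu, h⟩⟩⟩
        rintro (h | h)
        exacts [h.2, (heq hu h.1).trans h.2]
      · refine ⟨_, connectedComponentMk_mem_starComponents hY hv, fun c' =>
          ⟨?_, fun h => .inr ⟨hv, h⟩⟩⟩
        rintro (h | h)
        exacts [(heq h.1 hv).symm.trans h.2, h.2]
    simp only [localCoboundary, hiff]
    rw [Finset.sum_ite_eq, if_pos hc]
  · obtain ⟨hu, hv⟩ := not_or.1 hblocked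
    rw [hχ hu hv, CharTwo.add_self_eq_zero]
    exact Finset.sum_eq_zero fun c _ =>
      localCoboundary_of_notMem (fun h => hu h.1) fun h => hv h.1

lemma IsStrip.exists_isPrimitive_localCoboundary (h : IsStrip N e₁ e₂ ξ Λ) (hN : 2 * l + 1 < N)
    (hrow : ∃ v ∈ Λ, ∀ i : ℕ, v + i • e₁ ∉ box e₁ e₂ k l)
    (hpath : ∀ u v, ∀ w : (starGraph e₁ e₂ Y).Walk u v, w.IsPath → w.length ≤ l)
    (hχ : IsPrimitive e₁ e₂ (Λ \ Y) 0 χ) :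
    ∃ f, IsPrimitive e₁ e₂ Λ
        (localCoboundary (Y ∩ ((starGraph e₁ e₂ Y).connectedComponentMk k).supp) χ) f ∧
      ∀ v ∈ Λ, f v ≠ 0 → v ∈ box e₁ e₂ k l := by
  have hbox : Y ∩ ((starGraph e₁ e₂ Y).connectedComponentMk k).supp ⊆ box e₁ e₂ k l := by
    rintro v ⟨-, hv⟩
    obtain ⟨w, hw⟩ := (SimpleGraph.ConnectedComponent.exact hv).symm.exists_isPath
    exact box_mono (hpath _ _ w hw) (mem_box_of_walk w)
  refine h.exists_isPrimitive (isCocycle_localCoboundary h.add_mem hχ ?_) hN hrow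
    fun u v hu hv => localCoboundary_of_notMem (mt (@hbox u) hu) (mt (@hbox v) hv)
  exact fun u hu v hv huv =>
    ⟨hv, (connectedComponentMk_eq_of_mem_box hu.1 hv huv).symm.trans hu.2⟩

/-- The point `p` is joined within `Λ \ Y` to points outside any given box of radius `l`. As for
`IsStrip`, being joined is tested on functions that are constant along edges. -/
def EscapesBoxes (e₁ e₂ : V) (Λ Y : Set V) (l : ℕ) (p : V) : Prop :=
  ∀ k, ∃ v ∈ Λ, v ∉ box e₁ e₂ k l ∧ ∀ g, IsPrimitive e₁ e₂ (Λ \ Y) 0 g → g p = g v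

/-
If all `*`-components of `Y` are small, the coboundary of `χ` splits into cocycles with small
supports. These have primitives `f` with small supports, and `χ + ∑ f` is constant on `Λ`.
-/
theorem IsStrip.eq_of_isPrimitive_diff (h : IsStrip N e₁ e₂ ξ Λ) (hY : Y.Finite) (hYΛ : Y ⊆ Λ)
    (hN : 2 * l + 1 < N) (hrow : ∀ k ∈ Λ, ∃ v ∈ Λ, ∀ i : ℕ, v + i • e₁ ∉ box e₁ e₂ k l)
    (hpath : ∀ u v, ∀ w : (starGraph e₁ e₂ Y).Walk u v, w.IsPath → w.length ≤ l)
    (hχ : IsPrimitive e₁ e₂ (Λ \ Y) 0 χ) (hpΛ : p ∈ Λ) (hqΛ : q ∈ Λ)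
    (hp : EscapesBoxes e₁ e₂ Λ Y l p) (hq : EscapesBoxes e₁ e₂ Λ Y l q) :
    χ p = χ q := by
  have hf : ∀ c ∈ starComponents e₁ e₂ hY, ∃ f, IsPrimitive e₁ e₂ Λ
      (localCoboundary (Y ∩ c.supp) χ) f ∧ ∃ k, ∀ v ∈ Λ, f v ≠ 0 → v ∈ box e₁ e₂ k l := by
    intro c hc
    obtain ⟨k, hk, rfl⟩ := Finset.mem_image.1 hc
    obtain ⟨f, hf, hfk⟩ := h.exists_isPrimitive_localCoboundary hN
      (hrow k (hYΛ (hY.mem_toFinset.1 hk))) hpath hχ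
    exact ⟨f, hf, k, hfk⟩
  choose! f hf k hfk using hf
  have hconst : IsPrimitive e₁ e₂ Λ 0 (∑ c ∈ starComponents e₁ e₂ hY, f c + χ) := by
    intro e he v hv hve
    have hbox : v + e ∈ box e₁ e₂ v 1 := by
      apply mem_box_of_mem_square (v := v) <;> rcases he with rfl | rfl <;> simp
    have hsum := IsPrimitive.sum hf e he v hv hve
    simp only [Finset.sum_apply, Pi.add_apply, Pi.zero_apply] at hsum ⊢
    rw [sum_localCoboundary hY hbox (eq_add_of_isPrimitive_zero hχ he hv hve)] at hsum
    rw [hsum, add_zero, add_assoc, add_assoc, CharTwo.add_self_eq_zero, add_zero]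
  have hzero : ∀ c ∈ starComponents e₁ e₂ hY, ∀ x, EscapesBoxes e₁ e₂ Λ Y l x →
      f c x = 0 := by
    intro c hc x hx
    obtain ⟨v, hv, hvbox, hxv⟩ := hx (k c)
    rw [hxv (f c) fun e he u hu hue => ?_]
    · exact not_not.1 (mt (hfk c hc v hv) hvbox)
    · rw [hf c hc e he u hu.1 hue.1,
        localCoboundary_of_notMem (fun h => hu.2 h.1) fun h => hue.2 h.1]
      rfl
  have hpq := h.eq_of_isPrimitive _ hconst p hpΛ q hqΛ
  simpa only [Pi.add_apply, Finset.sum_apply, Finset.sum_eq_zero fun c hc => hzero c hc p hp,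
    Finset.sum_eq_zero fun c hc => hzero c hc q hq, zero_add] using hpq

end Duality

/-! ### Planes of the cylinder -/

section CylinderStep

variable {d N : ℕ} {t : Fin d} {i k : Fin (d + 1)} {x y : Cyl d N}

lemma add_zsmul_cylStep_snd (x : Cyl d N) (n : ℤ) :
    (x + n • cylStep d N i).2 = x.2 + if i = Fin.last d then n else 0 := by
  simp [cylStep, projE, latStep, Pi.single_apply, @eq_comm _ i]

/-- The coordinates of the cylinder reduced mod `N`, including the vertical one. -/
def modCoord (N : ℕ) (i : Fin (d + 1)) : Cyl d N →+ ZMod N :=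
  i.lastCases ((Int.castAddHom (ZMod N)).comp (AddMonoidHom.snd _ _))
    fun t => (Pi.evalAddMonoidHom _ t).comp (AddMonoidHom.fst _ _)

lemma modCoord_cylStep : modCoord N i (cylStep d N k) = if k = i then 1 else 0 := by
  induction i using Fin.lastCases with
  | last => simp [modCoord, cylStep, projE, latStep, Pi.single_apply, @eq_comm _ k]
  | cast t => simp [modCoord, cylStep, projE, latStep, Pi.single_apply, @eq_comm _ k]

lemma modCoord_add_zsmul_add_zsmul (h : k ≠ i) (a b : ℤ) :
    modCoord N i (x + a • cylStep d N k + b • cylStep d N i) = modCoord N i x + b := by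
  simp only [map_add, map_zsmul, modCoord_cylStep, if_neg h, smul_zero, add_zero, if_true,
    zsmul_one]

lemma adj_iff : adj d N x y ↔
    x ≠ y ∧ ∃ i, y = x + cylStep d N i ∨ x = y + cylStep d N i := by
  have hunit : unitVecs d = Finset.univ.image signedUnit := rfl
  simp only [adj, hunit, Finset.exists_mem_image, Finset.mem_univ, true_and, Prod.exists,
    Bool.exists_bool, signedUnit_true, signedUnit_false, projE_neg]
  simp only [cylStep, ← sub_eq_add_neg, eq_sub_iff_add_eq, @eq_comm _ _ x, or_comm]

lemma adj.symm (h : adj d N x y) : adj d N y x := by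
  rw [adj_iff] at h ⊢
  exact ⟨h.1.symm, h.2.imp fun _ => Or.symm⟩

lemma adj_add_cylStep [Fact (1 < N)] (x : Cyl d N) (i : Fin (d + 1)) :
    adj d N x (x + cylStep d N i) := by
  refine adj_iff.2 ⟨fun h => ?_, i, Or.inl rfl⟩
  have hzero := congrArg (modCoord N i) (left_eq_add.1 h)
  simp [modCoord_cylStep] at hzero

lemma mem_Cblk_iff_le_and_le {j : ℤ} :
    x ∈ Cblk d N j ↔ -(3 * N : ℤ) ≤ 4 * (x.2 - j * N) ∧ 4 * (x.2 - j * N) ≤ 3 * N := by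
  rw [← abs_le, abs_mul, mem_Cblk_iff]
  rfl

lemma add_nsmul_cylStep_mem_Cblk {j : ℤ} {m n : ℕ} (hx : x ∈ Cblk d N j)
    (hn : x + n • cylStep d N i ∈ Cblk d N j) (hmn : m ≤ n) :
    x + m • cylStep d N i ∈ Cblk d N j := by
  rw [← natCast_zsmul] at hn ⊢
  rw [mem_Cblk_iff_le_and_le] at hx
  rw [mem_Cblk_iff_le_and_le, add_zsmul_cylStep_snd] at hn ⊢
  split_ifs at hn ⊢ <;> lia

lemma Cblk_finite [NeZero N] (j : ℤ) : (Cblk d N j).Finite := by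
  refine (Set.finite_univ.prod (Set.finite_Icc (j * N - N) (j * N + N))).subset fun x hx => ?_
  rw [mem_Cblk_iff_le_and_le] at hx
  exact ⟨Set.mem_univ _, by constructor <;> lia⟩

end CylinderStep

section Plane

variable {d N l L : ℕ} {j : ℤ} {t : Fin d} {i i₁ i₂ : Fin (d + 1)} {X O : Set (Cyl d N)}
  {o p u v x y : Cyl d N}

/-- The plane through `o` spanned by `e₁` and `e₂`. -/
def plane {V : Type*} [AddCommGroup V] (e₁ e₂ o : V) : Set V :=
  {v | ∃ a b : ℤ, v = o + a • e₁ + b • e₂}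

lemma add_zsmul_mem_plane {V : Type*} [AddCommGroup V] {e₁ e₂ o v : V}
    (hv : v ∈ plane e₁ e₂ o) (a b : ℤ) : v + a • e₁ + b • e₂ ∈ plane e₁ e₂ o := by
  obtain ⟨a', b', rfl⟩ := hv
  exact ⟨a' + a, b' + b, by module⟩

/-- The part of a plane that lies in the block `C_j`. -/
abbrev planeStrip (j : ℤ) (i₁ i₂ : Fin (d + 1)) (o : Cyl d N) : Set (Cyl d N) :=
  plane (cylStep d N i₁) (cylStep d N i₂) o ∩ Cblk d N j

lemma exists_eq_plane_of_mem_Lcoll {F : Set (Cyl d N)} (hF : F ∈ Lcoll d N 2) :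
    ∃ t : Fin d, ∃ i, t.castSucc ≠ i ∧
      ∃ o, F = plane (cylStep d N t.castSucc) (cylStep d N i) o := by
  obtain ⟨I, hI, y, rfl⟩ := hF
  obtain ⟨i₁, i₂, hne, hlast, rfl⟩ :
      ∃ i₁ i₂, i₁ ≠ i₂ ∧ i₁ ≠ Fin.last d ∧ I = ({i₁, i₂} : Finset (Fin (d + 1))) := by
    obtain ⟨i₁, i₂, hne, rfl⟩ := Finset.card_eq_two.1 hI
    by_cases h : i₁ = Fin.last d
    · exact ⟨i₂, i₁, hne.symm, fun h' => hne (h.trans h'.symm), Finset.pair_comm _ _⟩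
    · exact ⟨i₁, i₂, hne, h, rfl⟩
  obtain ⟨t, rfl⟩ := Fin.exists_castSucc_eq.2 hlast
  have hproj : ∀ a b : ℤ,
      projE d N (y + (a • latStep (d + 1) t.castSucc + b • latStep (d + 1) i₂)) =
        projE d N y + a • cylStep d N t.castSucc + b • cylStep d N i₂ := fun a b => by
    change projHom d N _ = _
    rw [map_add, map_add, map_zsmul, map_zsmul, ← add_assoc]
    rfl
  refine ⟨t, i₂, hne, projE d N y, Set.Subset.antisymm ?_ ?_⟩
  · rintro _ ⟨v, hv, rfl⟩
    refine ⟨v t.castSucc, v i₂, hproj _ _ ▸ congrArg _ (congrArg (y + ·) (funext fun i => ?_))⟩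
    by_cases h₁ : i = t.castSucc
    · subst h₁; simp [latStep, hne]
    · by_cases h₂ : i = i₂
      · subst h₂; simp [latStep, h₁]
      · simp [latStep, h₁, h₂, hv i (by simp [h₁, h₂])]
  · rintro _ ⟨a, b, rfl⟩
    refine ⟨_, fun i hi => ?_, hproj a b⟩
    simp only [Finset.mem_insert, Finset.mem_singleton, not_or] at hi
    simp [latStep, hi.1, hi.2]

lemma eq_or_eq_of_add_cylStep_mem_plane [Fact (1 < N)]
    (hv : v ∈ plane (cylStep d N i₁) (cylStep d N i₂) o)
    (hvi : v + cylStep d N i ∈ plane (cylStep d N i₁) (cylStep d N i₂) o) : i = i₁ ∨ i = i₂ := by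
  by_contra! hne
  obtain ⟨a, b, rfl⟩ := hv
  obtain ⟨a', b', h⟩ := hvi
  have hcoord := congrArg (modCoord N i) h
  simp only [map_add, map_zsmul, modCoord_cylStep, if_neg (Ne.symm hne.1),
    if_neg (Ne.symm hne.2), smul_zero, add_zero, if_true, add_eq_left, one_ne_zero] at hcoord

lemma add_zsmul_mem_planeStrip (hu : u ∈ planeStrip j t.castSucc i o) (a : ℤ) :
    u + a • cylStep d N t.castSucc ∈ planeStrip j t.castSucc i o := by
  refine ⟨by simpa only [zero_smul, add_zero] using add_zsmul_mem_plane hu.1 a 0, ?_⟩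
  rw [mem_Cblk_iff, add_zsmul_cylStep_snd, if_neg t.castSucc_ne_last, add_zero, ← mem_Cblk_iff]
  exact hu.2

lemma add_nsmul_mem_planeStrip (hi : i = i₁ ∨ i = i₂) {m n : ℕ} (hu : u ∈ planeStrip j i₁ i₂ o)
    (hn : u + n • cylStep d N i ∈ planeStrip j i₁ i₂ o) (hmn : m ≤ n) :
    u + m • cylStep d N i ∈ planeStrip j i₁ i₂ o := by
  refine ⟨?_, add_nsmul_cylStep_mem_Cblk hu.2 hn.2 hmn⟩
  rcases hi with rfl | rfl
  · simpa only [zero_smul, add_zero, natCast_zsmul] using add_zsmul_mem_plane hu.1 m 0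
  · simpa only [zero_smul, add_zero, natCast_zsmul] using add_zsmul_mem_plane hu.1 0 m

lemma IsPrimitive.apply_add_zsmul_eq {g : Cyl d N → ZMod 2} (hi : i = i₁ ∨ i = i₂)
    (hg : IsPrimitive (cylStep d N i₁) (cylStep d N i₂) (planeStrip j i₁ i₂ o) 0 g)
    (hu : u ∈ planeStrip j i₁ i₂ o) {a : ℤ}
    (ha : u + a • cylStep d N i ∈ planeStrip j i₁ i₂ o) : g (u + a • cylStep d N i) = g u := by
  have hnat : ∀ n : ℕ, ∀ w ∈ planeStrip j i₁ i₂ o, w + n • cylStep d N i ∈ planeStrip j i₁ i₂ o →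
      g (w + n • cylStep d N i) = g w := fun n w hw => by
    induction n with
    | zero => intro _; rw [zero_smul, add_zero]
    | succ n ih =>
      intro hsucc
      have hn := add_nsmul_mem_planeStrip hi hw hsucc n.le_succ
      rw [succ_nsmul, ← add_assoc] at hsucc ⊢
      exact ((hg _ (hi.imp (congrArg _) (congrArg _)) _ hn hsucc).trans (add_zero _)).trans (ih hn)
  obtain ⟨n, rfl | rfl⟩ := a.eq_nat_or_neg
  · rw [natCast_zsmul] at ha ⊢
    exact hnat n u hu ha
  · have hback := hnat n _ ha
    rw [neg_smul, natCast_zsmul, neg_add_cancel_right] at hback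
    rw [neg_smul, natCast_zsmul]
    exact (hback hu).symm

lemma isStrip_planeStrip (hi : t.castSucc ≠ i) : IsStrip N (cylStep d N t.castSucc)
    (cylStep d N i) (modCoord N t.castSucc) (planeStrip j t.castSucc i o) where
  period := by
    rw [← natCast_zsmul]
    refine Prod.ext ?_ ?_
    · ext s
      simp
    · simpa [t.castSucc_ne_last] using
        add_zsmul_cylStep_snd (i := t.castSucc) (0 : Cyl d N) N
  coord_add_left v := by rw [map_add, modCoord_cylStep, if_pos rfl]
  coord_add_right v := by rw [map_add, modCoord_cylStep, if_neg hi.symm, add_zero]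
  add_mem v hv := by simpa only [one_smul] using add_zsmul_mem_planeStrip hv 1
  eq_of_isPrimitive g hg u hu v hv := by
    obtain ⟨a, b, rfl⟩ := id hu.1
    obtain ⟨a', b', rfl⟩ := id hv.1
    have hu' := add_zsmul_mem_planeStrip hu (a' - a)
    have hshift : o + a' • cylStep d N t.castSucc + b' • cylStep d N i =
        o + a • cylStep d N t.castSucc + b • cylStep d N i +
          (a' - a) • cylStep d N t.castSucc + (b' - b) • cylStep d N i := by
      module
    rw [hshift] at hv ⊢
    rw [hg.apply_add_zsmul_eq (Or.inr rfl) hu' hv, hg.apply_add_zsmul_eq (Or.inl rfl) hu hu']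

lemma exists_mem_planeStrip_forall_notMem_box (hi : t.castSucc ≠ i) (hlN : 4 * l + 8 ≤ N)
    (hk : u ∈ planeStrip j t.castSucc i o) :
    ∃ v ∈ planeStrip j t.castSucc i o, ∀ n : ℕ,
      v + n • cylStep d N t.castSucc ∉ box (cylStep d N t.castSucc) (cylStep d N i) u l := by
  obtain ⟨s, hs, hmem⟩ : ∃ s : ℤ, |s| = l + 1 ∧
      u + s • cylStep d N i ∈ planeStrip j t.castSucc i o := by
    have hplane (s : ℤ) := by
      simpa only [zero_smul, add_zero] using add_zsmul_mem_plane hk.1 0 s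
    have hheight := mem_Cblk_iff_le_and_le.1 hk.2
    rcases le_total (u.2 - j * N) 0 with hle | hle
    · refine ⟨l + 1, abs_of_nonneg (by lia), hplane _, ?_⟩
      rw [mem_Cblk_iff_le_and_le, add_zsmul_cylStep_snd]
      split_ifs <;> lia
    · refine ⟨-(l + 1), by rw [abs_neg, abs_of_nonneg (by lia)], hplane _, ?_⟩
      rw [mem_Cblk_iff_le_and_le, add_zsmul_cylStep_snd]
      split_ifs <;> lia
  refine ⟨_, hmem, fun n => ?_⟩
  rintro ⟨a, b, -, hb, heq⟩
  have hcoord := congrArg (modCoord N i) heq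
  rw [add_right_comm, ← natCast_zsmul, modCoord_add_zsmul_add_zsmul hi,
    modCoord_add_zsmul_add_zsmul hi, add_right_inj, ZMod.intCast_eq_intCast_iff_dvd_sub] at hcoord
  have hlt : |b - s| < N := (abs_sub _ _).trans_lt (by lia)
  have hbs := Int.eq_zero_of_abs_lt_dvd hcoord hlt
  rw [sub_eq_zero.1 hbs, hs] at hb
  lia

lemma cylDist_lt_of_mem_box (hi : i₁ ≠ i₂) (hl : 2 * l < L)
    (hx : x ∈ box (cylStep d N i₁) (cylStep d N i₂) p l)
    (hy : y ∈ box (cylStep d N i₁) (cylStep d N i₂) p l) : cylDist d N x y < L := by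
  obtain ⟨a, b, ha, hb, rfl⟩ := hx
  obtain ⟨a', b', ha', hb', rfl⟩ := hy
  refine lt_of_le_of_lt (Nat.sInf_le ⟨(a' - a) • latStep (d + 1) i₁ +
    (b' - b) • latStep (d + 1) i₂, ?_, rfl⟩) (lt_of_le_of_lt (Finset.sup_le fun i _ => ?_) hl)
  · change projHom d N _ = _
    rw [map_add, map_zsmul, map_zsmul]
    change (a' - a) • cylStep d N i₁ + (b' - b) • cylStep d N i₂ = _
    module
  · rw [abs_le] at ha hb ha' hb'
    simp only [Pi.add_apply, Pi.smul_apply, latStep, Pi.single_apply, smul_eq_mul]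
    split_ifs with h₁ h₂
    · exact absurd (h₁.symm.trans h₂) hi
    all_goals lia

end Plane

/-! ### Duality in the planes of the cylinder -/

section PlaneDuality

variable {d N l L : ℕ} {j : ℤ} {t : Fin d} {i₁ i₂ : Fin (d + 1)} {X Y O O₁ O₂ : Set (Cyl d N)}
  {g : Cyl d N → ZMod 2} {o p q u v x y : Cyl d N}

lemma IsPrimitive.apply_eq_of_adj [Fact (1 < N)]
    (hg : IsPrimitive (cylStep d N i₁) (cylStep d N i₂) (planeStrip j i₁ i₂ o \ Y) 0 g)
    (hu : u ∈ planeStrip j i₁ i₂ o \ Y) (hv : v ∈ planeStrip j i₁ i₂ o \ Y)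
    (huv : adj d N u v) : g u = g v := by
  obtain ⟨-, i, rfl | rfl⟩ := adj_iff.1 huv
  · have hi := eq_or_eq_of_add_cylStep_mem_plane hu.1.1 hv.1.1
    exact ((hg _ (hi.imp (congrArg _) (congrArg _)) u hu hv).trans (add_zero _)).symm
  · have hi := eq_or_eq_of_add_cylStep_mem_plane hv.1.1 hu.1.1
    exact (hg _ (hi.imp (congrArg _) (congrArg _)) v hv hu).trans (add_zero _)

lemma IsPrimitive.apply_eq_of_isConnIn [Fact (1 < N)]
    (hg : IsPrimitive (cylStep d N i₁) (cylStep d N i₂) (planeStrip j i₁ i₂ o \ Y) 0 g)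
    (hO : O ⊆ planeStrip j i₁ i₂ o \ Y) (hconn : IsConnIn d N O) (hu : u ∈ O) (hv : v ∈ O) :
    g u = g v := by
  have huv : Relation.ReflTransGen _ u v := hconn u hu v hv
  induction huv with
  | refl => rfl
  | tail _ hbc ih =>
    obtain ⟨hb, hc, hadj⟩ := hbc
    exact (ih hb).trans (hg.apply_eq_of_adj (hO hb) (hO hc) hadj)

lemma escapesBoxes_of_isConnIn [Fact (1 < N)] (hi : i₁ ≠ i₂) (hl : 2 * l < L)
    (hO : O ⊆ planeStrip j i₁ i₂ o \ Y) (hconn : IsConnIn d N O) (hdiam : diamGE d N O L)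
    (hp : p ∈ O) : EscapesBoxes (cylStep d N i₁) (cylStep d N i₂) (planeStrip j i₁ i₂ o) Y l p := by
  intro k
  obtain ⟨x, hx, y, hy, hxy⟩ := hdiam
  obtain ⟨v, hv, hvbox⟩ : ∃ v ∈ O, v ∉ box (cylStep d N i₁) (cylStep d N i₂) k l := by
    by_contra! hbox
    exact hxy.not_gt (cylDist_lt_of_mem_box hi hl (hbox x hx) (hbox y hy))
  exact ⟨v, (hO hv).1, hvbox, fun g hg => hg.apply_eq_of_isConnIn hO hconn hp hv⟩

lemma isPrimitive_indicator_connIn [Fact (1 < N)] (S : Set (Cyl d N)) (p : Cyl d N) :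
    IsPrimitive (cylStep d N i₁) (cylStep d N i₂) S 0 ({u | connIn d N S p u}.indicator 1) := by
  intro e he v hv hve
  have hadj : adj d N v (v + e) := by
    rcases he with rfl | rfl <;> exact adj_add_cylStep _ _
  have hiff : connIn d N S p (v + e) ↔ connIn d N S p v :=
    ⟨fun h => h.tail ⟨hve, hv, hadj.symm⟩, fun h => h.tail ⟨hv, hve, hadj⟩⟩
  simp only [Set.indicator_apply, Set.mem_ofPred_eq, hiff, Pi.one_apply, Pi.zero_apply, add_zero]

lemma exists_isPath_starGraph_of_not_connIn {F : Set (Cyl d N)} (hF : F ∈ Lcoll d N 2)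
    (hl : 2 * l < L) (hlN : 4 * l + 8 ≤ N) (hO₁ : O₁ ⊆ (F ∩ Cblk d N j) \ X)
    (hO₂ : O₂ ⊆ (F ∩ Cblk d N j) \ X) (hconn₁ : IsConnIn d N O₁) (hconn₂ : IsConnIn d N O₂)
    (hdiam₁ : diamGE d N O₁ L) (hdiam₂ : diamGE d N O₂ L) (hp : p ∈ O₁) (hq : q ∈ O₂)
    (hpq : ¬ connIn d N ((F ∩ Cblk d N j) \ X) p q) :
    ∃ i₁ i₂ u v, ∃ w : (starGraph (cylStep d N i₁) (cylStep d N i₂)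
      (X ∩ (F ∩ Cblk d N j))).Walk u v, w.IsPath ∧ l < w.length := by
  have : Fact (1 < N) := ⟨by lia⟩
  have : NeZero N := ⟨by lia⟩
  obtain ⟨t, i, hi, o, rfl⟩ := exists_eq_plane_of_mem_Lcoll hF
  refine ⟨t.castSucc, i, ?_⟩
  by_contra! hpath
  rw [← Set.sdiff_inter_self_eq_sdiff] at hO₁ hO₂ hpq
  have heq := (isStrip_planeStrip hi).eq_of_isPrimitive_diff
    ((Cblk_finite j).subset fun _ h => h.2.2) Set.inter_subset_right (by lia)
    (fun k hk => exists_mem_planeStrip_forall_notMem_box hi hlN hk) hpath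
    (isPrimitive_indicator_connIn _ p) (hO₁ hp).1 (hO₂ hq).1
    (escapesBoxes_of_isConnIn hi hl hO₁ hconn₁ hdiam₁ hp)
    (escapesBoxes_of_isConnIn hi hl hO₂ hconn₂ hdiam₂ hq)
  have hpp : connIn d N (planeStrip j t.castSucc i o \ (X ∩ planeStrip j t.castSucc i o)) p p :=
    .refl
  simp only [Set.indicator_apply, Set.mem_ofPred_eq, if_neg hpq, if_pos hpp, Pi.one_apply,
    one_ne_zero] at heq

end PlaneDuality

/-! ### Counting star paths -/

section StarPaths

variable {V : Type*} [AddCommGroup V] {e₁ e₂ : V} {Y : Set V} {u v : V} {δ : ℤ × ℤ} {n : ℕ}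

/-- The coordinates of the eight steps of a star path. -/
noncomputable def starDirs : Finset (ℤ × ℤ) := (Finset.Icc (-1) 1 ×ˢ Finset.Icc (-1) 1).erase 0

lemma card_starDirs : starDirs.card = 8 := by decide

lemma card_starDirs_erase_neg (hδ : δ ∈ starDirs) : (starDirs.erase (-δ)).card = 7 := by
  have hneg : -δ ∈ starDirs := by revert δ; decide
  rw [Finset.card_erase_of_mem hneg, card_starDirs]

/-- The vertex sets of the non-backtracking star paths with `n` steps that start at `v`. The
argument `δ` is the step that led to `v`, so the first step is not `-δ`; for `δ = 0` the first step
is arbitrary. -/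
noncomputable def starPaths (e₁ e₂ : V) : ℕ → V → ℤ × ℤ → Finset (Finset V)
  | 0, v, _ => {{v}}
  | n + 1, v, δ => (starDirs.erase (-δ)).biUnion fun δ' =>
      (starPaths e₁ e₂ n (v + δ'.1 • e₁ + δ'.2 • e₂) δ').image (insert v)

lemma card_starPaths_le (e₁ e₂ v : V) (hδ : δ ∈ starDirs) :
    (starPaths e₁ e₂ n v δ).card ≤ 7 ^ n := by
  induction n generalizing v δ with
  | zero => rfl
  | succ n ih =>
    refine (Finset.card_biUnion_le_card_mul _ _ (7 ^ n) fun δ' hδ' => ?_).trans_eq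
      (by rw [card_starDirs_erase_neg hδ, pow_succ'])
    exact Finset.card_image_le.trans (ih _ (Finset.mem_of_mem_erase hδ'))

lemma card_starPaths_succ_zero_le (e₁ e₂ v : V) (n : ℕ) :
    (starPaths e₁ e₂ (n + 1) v 0).card ≤ 8 * 7 ^ n := by
  refine (Finset.card_biUnion_le_card_mul _ _ (7 ^ n) fun δ' hδ' => ?_).trans
    (Nat.mul_le_mul_right _ (Finset.card_le_card (Finset.erase_subset _ _)))
  exact Finset.card_image_le.trans (card_starPaths_le _ _ _ (Finset.mem_of_mem_erase hδ'))

lemma exists_mem_starDirs_of_adj (h : (starGraph e₁ e₂ Y).Adj u v) :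
    ∃ δ ∈ starDirs, v = u + δ.1 • e₁ + δ.2 • e₂ := by
  obtain ⟨hne, -, -, a, b, ha, hb, rfl⟩ := h
  refine ⟨(a, b), Finset.mem_erase.2 ⟨?_, ?_⟩, rfl⟩
  · rintro ⟨⟩
    exact hne (by module)
  · exact Finset.mem_product.2 ⟨Finset.mem_Icc.2 (abs_le.1 ha), Finset.mem_Icc.2 (abs_le.1 hb)⟩

lemma exists_mem_starPaths_of_isPath (w : (starGraph e₁ e₂ Y).Walk u v) (hw : w.IsPath)
    (hn : n ≤ w.length) (hu : u ∈ Y)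
    (hδ : δ ≠ 0 → u + (-δ).1 • e₁ + (-δ).2 • e₂ ∉ w.support) :
    ∃ A ∈ starPaths e₁ e₂ n u δ, A.card = n + 1 ∧ (∀ x ∈ A, x ∈ w.support) ∧ ↑A ⊆ Y := by
  induction n generalizing u δ with
  | zero => exact ⟨{u}, by simp [starPaths], by simp, by simp, by simpa using hu⟩
  | succ n ih =>
    cases w with
    | nil => simp at hn
    | cons hadj w =>
      obtain ⟨hw, huw⟩ := (SimpleGraph.Walk.cons_isPath_iff _ _).1 hw
      obtain ⟨δ', hδ', rfl⟩ := exists_mem_starDirs_of_adj hadj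
      have hback : u + δ'.1 • e₁ + δ'.2 • e₂ + (-δ').1 • e₁ + (-δ').2 • e₂ = u := by
        simp only [Prod.fst_neg, Prod.snd_neg]; module
      obtain ⟨A, hA, hcard, hAw, hAY⟩ := ih w hw (by simpa using hn) hadj.2.2.1 (δ := δ')
        (fun _ => hback.symm ▸ huw)
      have hδδ' : δ' ≠ -δ := by
        rintro rfl
        refine hδ (fun h0 => Finset.ne_of_mem_erase hδ' (by simp [h0])) ?_
        exact List.mem_cons_of_mem _ w.start_mem_support
      refine ⟨insert u A, ?_, ?_, ?_, ?_⟩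
      · exact Finset.mem_biUnion.2 ⟨δ', Finset.mem_erase.2 ⟨hδδ', hδ'⟩,
          Finset.mem_image_of_mem _ hA⟩
      · rw [Finset.card_insert_of_notMem (fun h => huw (hAw u h)), hcard]
      · exact Finset.forall_mem_insert _ _ _ |>.2 ⟨List.mem_cons_self,
          fun x hx => List.mem_cons_of_mem _ (hAw x hx)⟩
      · rw [Finset.coe_insert]
        exact Set.insert_subset hu hAY

end StarPaths

/-! ### The union bound -/

section UnionBound

variable {d N l k : ℕ} {j : ℤ} {K b : ℝ}

lemma card_univ_product_Icc_eq [NeZero N] (j : ℤ) :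
    ((Finset.univ : Finset (Fin d → ZMod N)) ×ˢ Finset.Icc (j * N - N) (j * N + N)).card =
      N ^ d * (2 * N + 1) := by
  rw [Finset.card_product, Finset.card_univ, Fintype.card_fun, ZMod.card, Fintype.card_fin,
    Int.card_Icc]
  congr 1
  lia

/-- The traces of the star paths with `l + 1` steps in the planes of `C_j` that start at `x` and
have direction `(i₁, i₂)`, where `p = ((i₁, i₂), x)`. -/
noncomputable def planeStarPaths (d N : ℕ) (j : ℤ) (l : ℕ)
    (p : (Fin (d + 1) × Fin (d + 1)) × Cyl d N) : Finset (Finset (Cyl d N)) :=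
  (starPaths (cylStep d N p.1.1) (cylStep d N p.1.2) (l + 1) p.2 0).filter
    fun A => A.card = l + 2 ∧ ∃ F ∈ Lcoll d N 2, ↑A ⊆ F ∩ Cblk d N j

lemma card_planeStarPaths_le (p : (Fin (d + 1) × Fin (d + 1)) × Cyl d N) :
    (planeStarPaths d N j l p).card ≤ 8 * 7 ^ l :=
  (Finset.card_filter_le _ _).trans (card_starPaths_succ_zero_le _ _ _ _)

lemma exists_mem_planeStarPaths_of_notMem_Uev {ω : ℕ → Cyl d N}
    (hl : 2 * l < ⌊K * Real.log N⌋₊) (hN : 4 * l + 8 ≤ N) (hω : ω ∉ Uev d N K j k) :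
    ∃ i u, u ∈ Cblk d N j ∧ ∃ A ∈ planeStarPaths d N j l (i, u),
      ↑A ⊆ ranE ω (DD d N j k ω) := by
  simp only [Uev, Set.mem_ofPred_eq] at hω
  push Not at hω
  obtain ⟨F, hF, n, hn, O₁, O₂, hO₁, hO₂, hconn₁, hconn₂, hdiam₁, hdiam₂, p, hp, q, hq, hpq⟩ := hω
  obtain ⟨i₁, i₂, u, v, w, hw, hlen⟩ := exists_isPath_starGraph_of_not_connIn hF hl hN hO₁ hO₂
    hconn₁ hconn₂ hdiam₁ hdiam₂ hp hq hpq
  have hu : u ∈ ran ω n ∩ (F ∩ Cblk d N j) := by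
    cases w with
    | nil => simp at hlen
    | cons hadj _ => exact hadj.2.1
  obtain ⟨A, hA, hcard, -, hAY⟩ :=
    exists_mem_starPaths_of_isPath (n := l + 1) (δ := 0) w hw hlen hu (fun h => absurd rfl h)
  refine ⟨(i₁, i₂), u, hu.2.2, A,
    Finset.mem_filter.2 ⟨hA, hcard, F, hF, hAY.trans Set.inter_subset_right⟩, fun x hx => ?_⟩
  obtain ⟨m, hm, rfl⟩ := (hAY hx).1
  exact ⟨m, (Nat.cast_le.2 hm).trans hn, rfl⟩

lemma measureReal_compl_Uev_le (hl : 2 * l < ⌊K * Real.log N⌋₊) (hN : 4 * l + 8 ≤ N)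
    {μ : Measure (ℕ → Cyl d N)} [IsFiniteMeasure μ]
    (hb : ∀ F ∈ Lcoll d N 2, ∀ A : Finset (Cyl d N), ↑A ⊆ F ∩ Cblk d N j → A.card = l + 2 →
      μ.real {ω | ↑A ⊆ ranE ω (DD d N j k ω)} ≤ b) (hb0 : 0 ≤ b) :
    μ.real (Uev d N K j k)ᶜ ≤ (d + 1) ^ 2 * (N ^ d * (2 * N + 1)) * (8 * 7 ^ l) * b := by
  have : NeZero N := ⟨by lia⟩
  let T : Finset ((Fin (d + 1) × Fin (d + 1)) × Cyl d N) :=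
    Finset.univ ×ˢ (Finset.univ ×ˢ Finset.Icc (j * N - N) (j * N + N))
  have hT : T.card = (d + 1) ^ 2 * (N ^ d * (2 * N + 1)) := by
    rw [Finset.card_product, card_univ_product_Icc_eq, Finset.card_univ, Fintype.card_prod,
      Fintype.card_fin, ← sq]
  have hsub : (Uev d N K j k)ᶜ ⊆
      ⋃ p ∈ T, ⋃ A ∈ planeStarPaths d N j l p, {ω | ↑A ⊆ ranE ω (DD d N j k ω)} := by
    intro ω hω
    obtain ⟨i, u, hu, A, hA, hAω⟩ := exists_mem_planeStarPaths_of_notMem_Uev hl hN hω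
    rw [mem_Cblk_iff_le_and_le] at hu
    have hiu : (i, u) ∈ T := Finset.mem_product.2 ⟨Finset.mem_univ _,
      Finset.mem_product.2 ⟨Finset.mem_univ _, Finset.mem_Icc.2 (by lia)⟩⟩
    exact Set.mem_biUnion hiu (Set.mem_biUnion hA hAω)
  have hpaths : ∀ p ∈ T, μ.real (⋃ A ∈ planeStarPaths d N j l p,
      {ω | ↑A ⊆ ranE ω (DD d N j k ω)}) ≤ 8 * 7 ^ l * b := by
    intro p _
    refine (measureReal_biUnion_finset_le _ _).trans
      ((Finset.sum_le_card_nsmul _ _ b fun A hA => ?_).trans ?_)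
    · obtain ⟨hcard, F, hF, hAF⟩ := (Finset.mem_filter.1 hA).2
      exact hb F hF A hAF hcard
    · rw [nsmul_eq_mul]
      exact mul_le_mul_of_nonneg_right (mod_cast card_planeStarPaths_le p) hb0
  calc μ.real (Uev d N K j k)ᶜ ≤ _ := measureReal_mono hsub (measure_ne_top _ _)
    _ ≤ _ := measureReal_biUnion_finset_le _ _
    _ ≤ T.card • (8 * 7 ^ l * b) := Finset.sum_le_card_nsmul _ _ _ hpaths
    _ = (d + 1) ^ 2 * (N ^ d * (2 * N + 1)) * (8 * 7 ^ l) * b := by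
      rw [nsmul_eq_mul, hT]; push_cast; ring

lemma lawP_apply_le (hN : 1 ≤ N) {Pl : Cyl d N → Measure (ℕ → Cyl d N)} {E : Set (ℕ → Cyl d N)}
    {b : ℝ≥0∞} (h : ∀ x, Pl x E ≤ b) : lawP d N Pl E ≤ b := by
  have : NeZero N := ⟨by lia⟩
  let S : Finset (Cyl d N) := Finset.univ ×ˢ Finset.Icc (0 * N - N : ℤ) (0 * N + N)
  have hcard : (S.card : ℝ≥0∞) = (N : ℝ≥0∞) ^ d * (2 * N + 1) := by
    rw [card_univ_product_Icc_eq]; norm_cast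
  have hsum : ∑' x : Cyl d N, (if x ∈ Bblk d N 0 then Pl x else 0) E ≤ S.card * b := by
    rw [tsum_eq_sum (s := S)]
    · refine (Finset.sum_le_card_nsmul S _ b fun x _ => ?_).trans_eq (nsmul_eq_mul _ _)
      split_ifs
      exacts [h x, zero_le]
    · intro x hx
      rw [if_neg, Measure.coe_zero, Pi.zero_apply]
      rintro ⟨h₁, h₂⟩
      exact hx (Finset.mem_product.2 ⟨Finset.mem_univ _, Finset.mem_Icc.2 (by lia)⟩)
  have hcard0 : (S.card : ℝ≥0∞) ≠ 0 := by
    rw [hcard]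
    positivity
  rw [lawP, Measure.smul_apply, Measure.sum_apply_of_countable, smul_eq_mul, ← hcard]
  calc (S.card : ℝ≥0∞)⁻¹ * _ ≤ (S.card : ℝ≥0∞)⁻¹ * (S.card * b) := mul_le_mul_right hsum _
    _ = b := ENNReal.inv_mul_cancel_left' (by simp [hcard0]) (by simp)

end UnionBound

/-! ### Asymptotics -/

section Asymptotics

variable {d : ℕ} {Q : ZLat (d - 1) → Measure (ℕ → ZLat (d - 1))} {r θ ρ : ℝ}

lemma eventually_mul_log_add_le (c b : ℝ) : ∀ᶠ N : ℕ in atTop, c * Real.log N + b ≤ N := by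
  have ho : (fun x : ℝ => c * Real.log x + b) =o[atTop] (id : ℝ → ℝ) :=
    (Real.isLittleO_log_id_atTop.const_mul_left c).add (Asymptotics.isLittleO_const_id_atTop b)
  filter_upwards [tendsto_natCast_atTop_atTop.eventually (ho.bound one_pos)] with N hN
  simpa using (le_abs_self _).trans hN

lemma pow_le_inv_pow_of_mul_log_le {x : ℝ} {m e : ℕ} (hr : 0 < r) (hx : 0 < x)
    (h : e * Real.log x ≤ m * -Real.log r) : r ^ m ≤ (x ^ e)⁻¹ := by
  rw [← Real.log_le_log_iff (by positivity) (by positivity), Real.log_pow, Real.log_inv,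
    Real.log_pow]
  linarith

lemma one_add_div_pow_floor_le_exp {a u x : ℝ} (ha : 0 ≤ a) (hu : 0 ≤ u) (hx : 0 < x) :
    (1 + a / x) ^ ⌊u * x⌋₊ ≤ Real.exp (a * u) :=
  calc (1 + a / x) ^ ⌊u * x⌋₊ ≤ Real.exp (a / x) ^ ⌊u * x⌋₊ := by
        gcongr
        linarith [Real.add_one_le_exp (a / x)]
    _ = Real.exp (⌊u * x⌋₊ * (a / x)) := (Real.exp_nat_mul _ _).symm
    _ ≤ Real.exp (u * x * (a / x)) := by
        gcongr
        exact Nat.floor_le (by positivity)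
    _ = Real.exp (a * u) := by congr 1; field_simp

lemma exists_pos_mul_exp_le {C s : ℝ} (hC : 0 ≤ C) (hs : 0 < s) (hsr : s < r) :
    ∃ u > 0, s * Real.exp (C * u) ≤ r := by
  have hlog : 0 < Real.log (r / s) := Real.log_pos ((one_lt_div hs).2 hsr)
  refine ⟨Real.log (r / s) / (C + 1), by positivity, ?_⟩
  have hle : C * (Real.log (r / s) / (C + 1)) ≤ Real.log (r / s) := by
    rw [mul_div_assoc', div_le_iff₀ (by positivity)]
    nlinarith
  calc s * Real.exp (C * (Real.log (r / s) / (C + 1))) ≤ s * Real.exp (Real.log (r / s)) := by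
        gcongr
    _ = r := by rw [Real.exp_log (div_pos (hs.trans hsr) hs), mul_div_cancel₀ _ hs.ne']

theorem exists_forall_real_lawP_compl_Uev_le (hd : 4 ≤ d) (hQ : IsLatRW (d - 1) Q) (hθ0 : 0 ≤ θ)
    (hθ1 : θ ≤ 1) (hθ : 2 / ((d : ℝ) + 1) + (1 - 2 / ((d : ℝ) + 1)) * retProb (d - 1) Q < θ) :
    ∃ M ≥ 0, ∃ C ≥ 0, ∀ᶠ N : ℕ in atTop, ∀ Pl, IsCylRW d N Pl → ∀ j K k l,
      2 * l < ⌊K * Real.log N⌋₊ → 4 * l + 8 ≤ N → (lawP d N Pl).real (Uev d N K j k)ᶜ ≤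
        M * N ^ (d + 1) * (7 * θ) ^ (l + 2) * (1 + C * (l + 2) / N ^ (d - 1)) ^ k := by
  have hdim : (((d - 1 : ℕ) : ℝ)) / (d + 1) = 1 - 2 / (d + 1) := by
    rw [Nat.cast_pred (by lia)]
    field_simp
    ring
  obtain ⟨M, hM, C, hC, hcov⟩ := exists_forall_real_subset_ranE_DD_le (d := d) (m := 2)
    (show 3 ≤ d - 1 by lia) (by lia) hQ hθ0 hθ1 (by rwa [hdim, sub_sub_cancel])
  refine ⟨24 * (d + 1) ^ 2 * M, by positivity, C, hC, ?_⟩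
  filter_upwards [hcov, eventually_ge_atTop 1] with N hcov hN Pl hPl j K k l hl hlN
  set b := θ ^ (l + 2) * M * (1 + C * (l + 2) / (N : ℝ) ^ (d - 1)) ^ k
  have hb0 : 0 ≤ b := by positivity
  have hstart : ∀ z, (Pl z).real (Uev d N K j k)ᶜ ≤
      (d + 1) ^ 2 * (N ^ d * (2 * N + 1)) * (8 * 7 ^ l) * b := by
    intro z
    have := hPl.1 z
    refine measureReal_compl_Uev_le hl hlN (fun F hF A hA hcard => ?_) hb0
    exact (hcov Pl hPl j F hF A hA k z).trans_eq (by rw [hcard]; push_cast; rfl)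
  have hvol : (N : ℝ) ^ d * (2 * N + 1) ≤ 3 * N ^ (d + 1) := by
    have hN1 : (1 : ℝ) ≤ N := mod_cast hN
    calc (N : ℝ) ^ d * (2 * N + 1) ≤ N ^ d * (2 * N + N) := by gcongr
      _ = 3 * N ^ (d + 1) := by ring
  calc (lawP d N Pl).real (Uev d N K j k)ᶜ
      ≤ (d + 1) ^ 2 * (N ^ d * (2 * N + 1)) * (8 * 7 ^ l) * b := by
        refine ENNReal.toReal_le_of_le_ofReal (by positivity) (lawP_apply_le hN fun z => ?_)
        have := hPl.1 z
        exact (ofReal_measureReal).symm.trans_le (ENNReal.ofReal_le_ofReal (hstart z))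
    _ ≤ (d + 1) ^ 2 * (3 * N ^ (d + 1)) * (8 * 7 ^ (l + 2)) * b := by
        gcongr <;> norm_num
    _ = _ := by
        rw [mul_pow]; ring

lemma exists_forall_real_lawP_compl_Uev_floor_le (hd : 4 ≤ d) (hQ : IsLatRW (d - 1) Q)
    (hρ : ρ = 7 * (2 / ((d : ℝ) + 1) + (1 - 2 / ((d : ℝ) + 1)) * retProb (d - 1) Q))
    (hρ0 : 0 < ρ) (hρr : ρ < r) (hr : r ≤ 1) :
    ∃ u₀ > 0, ∃ M ≥ 0, ∀ᶠ N : ℕ in atTop, ∀ Pl, IsCylRW d N Pl → ∀ j K l,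
      2 * l < ⌊K * Real.log N⌋₊ → 4 * l + 8 ≤ N →
      (lawP d N Pl).real (Uev d N K j ⌊u₀ * (N : ℝ) ^ (d - 1)⌋₊)ᶜ ≤
        M * N ^ (d + 1) * r ^ (l + 2) := by
  obtain ⟨s, hρs, hsr⟩ := exists_between hρr
  have hs0 : 0 < s := hρ0.trans hρs
  obtain ⟨M, hM, C, hC, hbound⟩ := exists_forall_real_lawP_compl_Uev_le (θ := s / 7) hd hQ
    (by positivity) (by linarith) (by linarith)
  obtain ⟨u₀, hu₀, hexp⟩ := exists_pos_mul_exp_le hC hs0 hsr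
  refine ⟨u₀, hu₀, M, hM, ?_⟩
  filter_upwards [hbound, eventually_gt_atTop 0] with N hbound hN Pl hPl j K l hl hlN
  refine (hbound Pl hPl j K _ l hl hlN).trans ?_
  have hpow : (1 + C * (l + 2) / (N : ℝ) ^ (d - 1)) ^ ⌊u₀ * (N : ℝ) ^ (d - 1)⌋₊ ≤
      Real.exp (C * u₀) ^ (l + 2) := by
    refine (one_add_div_pow_floor_le_exp (by positivity) hu₀.le (by positivity)).trans_eq ?_
    rw [← Real.exp_nat_mul]
    push_cast
    ring_nf
  calc _ ≤ M * N ^ (d + 1) * s ^ (l + 2) * Real.exp (C * u₀) ^ (l + 2) := by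
        rw [mul_div_cancel₀ _ (by norm_num)]
        gcongr
    _ = M * N ^ (d + 1) * (s * Real.exp (C * u₀)) ^ (l + 2) := by rw [mul_pow, mul_assoc]
    _ ≤ M * N ^ (d + 1) * r ^ (l + 2) := by gcongr

lemma rpow_pow_le_inv_pow (hd : 4 ≤ d) (hρ0 : 0 < ρ) (hρ1 : ρ < 1) {N m : ℕ} (hN : 1 ≤ N)
    (hm : 8 * d / Real.log (1 / ρ) * Real.log N ≤ 2 * m) :
    (ρ ^ (7 / 8 : ℝ)) ^ m ≤ ((N : ℝ) ^ (3 * d + 2))⁻¹ := by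
  refine pow_le_inv_pow_of_mul_log_le (by positivity) (by positivity) ?_
  rw [one_div, Real.log_inv] at hm
  have hlog : 0 < -Real.log ρ := neg_pos.2 (Real.log_neg hρ0 hρ1)
  have hd' : (4 : ℝ) ≤ d := mod_cast hd
  rw [div_mul_eq_mul_div, div_le_iff₀ hlog] at hm
  rw [Real.log_rpow hρ0]
  have hle : (3 * d + 2) * Real.log N ≤ 7 / 2 * d * Real.log N := by
    gcongr
    linarith
  push_cast
  linarith

lemma exists_forall_real_lawP_compl_Uev_log_le (hd : 4 ≤ d) (hQ : IsLatRW (d - 1) Q)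
    (hρ : ρ = 7 * (2 / ((d : ℝ) + 1) + (1 - 2 / ((d : ℝ) + 1)) * retProb (d - 1) Q))
    (hρ0 : 0 < ρ) (hρ1 : ρ < 1) :
    ∃ u₀ > 0, ∃ M : ℝ, ∀ᶠ N : ℕ in atTop, ∀ Pl, IsCylRW d N Pl → ∀ j,
      (lawP d N Pl).real
        (Uev d N (8 * d / Real.log (1 / ρ)) j ⌊u₀ * (N : ℝ) ^ (d - 1)⌋₊)ᶜ ≤
        M * ((N : ℝ) ^ (2 * d + 1))⁻¹ := by
  have hρr : ρ < ρ ^ (7 / 8 : ℝ) := by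
    simpa using Real.rpow_lt_rpow_of_exponent_gt hρ0 hρ1 (show (7 / 8 : ℝ) < 1 by norm_num)
  obtain ⟨u₀, hu₀, M, hM, hbound⟩ := exists_forall_real_lawP_compl_Uev_floor_le hd hQ hρ hρ0 hρr
    (Real.rpow_le_one hρ0.le hρ1.le (by norm_num))
  refine ⟨u₀, hu₀, M, ?_⟩
  set K := 8 * d / Real.log (1 / ρ)
  have hK0 : 0 < K := by
    have := Real.log_pos ((one_lt_div hρ0).2 hρ1)
    positivity
  have hlog : Tendsto (fun N : ℕ => K * Real.log N) atTop atTop :=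
    (Real.tendsto_log_atTop.comp tendsto_natCast_atTop_atTop).const_mul_atTop hK0
  filter_upwards [hbound, eventually_ge_atTop 1, hlog.eventually_ge_atTop 1,
    eventually_mul_log_add_le (2 * K) 8] with N hbound hN hlog1 hlogN Pl hPl j
  set L := ⌊K * Real.log N⌋₊
  have hL1 : 1 ≤ L := Nat.le_floor (by exact_mod_cast hlog1)
  have hL2 : (2 * L + 8 : ℝ) ≤ N := by
    linarith [Nat.floor_le (show 0 ≤ K * Real.log N by linarith)]
  have hL3 : 2 * L + 8 ≤ N := mod_cast hL2
  have hdecay : (ρ ^ (7 / 8 : ℝ)) ^ ((L - 1) / 2 + 2) ≤ ((N : ℝ) ^ (3 * d + 2))⁻¹ := by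
    have hL4 : (L + 1 : ℝ) ≤ 2 * ((L - 1) / 2 + 2 : ℕ) := by
      exact_mod_cast (show L + 1 ≤ 2 * ((L - 1) / 2 + 2) by lia)
    exact rpow_pow_le_inv_pow hd hρ0 hρ1 hN ((Nat.lt_floor_add_one _).le.trans hL4)
  calc _ ≤ M * N ^ (d + 1) * (ρ ^ (7 / 8 : ℝ)) ^ ((L - 1) / 2 + 2) :=
        hbound Pl hPl j K _ (by lia) (by lia)
    _ ≤ M * N ^ (d + 1) * ((N : ℝ) ^ (3 * d + 2))⁻¹ := by gcongr
    _ = M * ((N : ℝ) ^ (2 * d + 1))⁻¹ := by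
        rw [show 3 * d + 2 = d + 1 + (2 * d + 1) by ring, pow_add _ (d + 1)]
        field_simp

lemma two_div_add_mul_retProb_pos (hd : 1 ≤ d) (Q : ZLat (d - 1) → Measure (ℕ → ZLat (d - 1))) :
    0 < 2 / ((d : ℝ) + 1) + (1 - 2 / ((d : ℝ) + 1)) * retProb (d - 1) Q := by
  have hd' : (1 : ℝ) ≤ d := mod_cast hd
  have hle : 2 / ((d : ℝ) + 1) ≤ 1 := (div_le_one (by positivity)).2 (by linarith)
  have hmul : 0 ≤ (1 - 2 / ((d : ℝ) + 1)) * retProb (d - 1) Q :=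
    mul_nonneg (sub_nonneg.2 hle) ENNReal.toReal_nonneg
  positivity

end Asymptotics

/-- **Corollary 1.4.** If `d ≥ 4` and `ρ = 7(2/(d+1) + (1 - 2/(d+1)) q(d-1)) < 1`, then
with `c₀ = 8d/log(1/ρ)` there exists `u₀ > 0` such that
`lim_N N^{2d} sup_j P[(U_{c₀,j,u₀N^{d-1}})^c] = 0`. -/
theorem statement_8 (d : ℕ) (hd : 4 ≤ d)
    (Q : ZLat (d - 1) → Measure (ℕ → ZLat (d - 1))) (hQ : IsLatRW (d - 1) Q)
    (hrho : 7 * (2 / ((d : ℝ) + 1) + (1 - 2 / ((d : ℝ) + 1)) * retProb (d - 1) Q) < 1)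
    (Pl : ∀ N : ℕ, Cyl d N → Measure (ℕ → Cyl d N))
    (hPl : ∀ N : ℕ, IsCylRW d N (Pl N)) :
    ∃ u₀ : ℝ, 0 < u₀ ∧
      Tendsto (fun N : ℕ =>
          (N : ℝ) ^ (2 * d) * ⨆ j : ℤ,
            ((lawP d N (Pl N))
              (Uev d N
                (8 * d / Real.log
                  (1 / (7 * (2 / ((d : ℝ) + 1)
                    + (1 - 2 / ((d : ℝ) + 1)) * retProb (d - 1) Q))))
                j ⌊u₀ * (N : ℝ) ^ (d - 1)⌋₊)ᶜ).toReal)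
        atTop (nhds 0) := by
  set ρ := 7 * (2 / ((d : ℝ) + 1) + (1 - 2 / ((d : ℝ) + 1)) * retProb (d - 1) Q) with hρ
  have hρ0 : 0 < ρ := mul_pos (by norm_num) (two_div_add_mul_retProb_pos (by lia) Q)
  obtain ⟨u₀, hu₀, M, hbound⟩ :=
    exists_forall_real_lawP_compl_Uev_log_le hd hQ hρ hρ0 hrho
  have hlim : Tendsto (fun N : ℕ => M * (N : ℝ)⁻¹) atTop (nhds 0) := by
    simpa using tendsto_inv_atTop_nhds_zero_nat.const_mul M
  refine ⟨u₀, hu₀, squeeze_zero' (.of_forall fun N => ?_) ?_ hlim⟩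
  · exact mul_nonneg (by positivity) (Real.iSup_nonneg fun j => ENNReal.toReal_nonneg)
  filter_upwards [hbound, eventually_gt_atTop 0] with N hbound hN
  calc (N : ℝ) ^ (2 * d) * _ ≤ N ^ (2 * d) * (M * ((N : ℝ) ^ (2 * d + 1))⁻¹) := by
        gcongr
        exact ciSup_le fun j => hbound (Pl N) (hPl N) j
    _ = M * (N : ℝ)⁻¹ := by
        rw [pow_succ]
        field_simp

end DiscCyl
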